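/- arXiv:2401.00612 — 3 statements merged into one kernel-verified Lean document; each statement's English description precedes it below -/
import Mathlib

section
/- Let (X, ‖·‖) be an infinite-dimensional separable real Banach space and let ε > 0. Then there exists an equivalent norm |||·||| on X with ‖x‖ ≤ |||x||| ≤ (1+ε)‖x‖ for all x ∈ X, such that (X, |||·|||) has an Auerbach basis {x_n, x_n*}_{n∈ℕ} (an M-basis with |||x_n||| = |||x_n*||| = 1 for all n, the dual norm taken with respect to |||·|||) with the property that for every permutation σ of ℕ there is no constant C < ∞ satisfying ‖Σ_{i≤m} a_i x_{σ(i)}‖ ≤ C‖Σ_{i≤n} a_i x_{σ(i)}‖ for all m ≤ n and all scalars; in particular no permutation of this Auerbach basis is equivalent to a Schauder basis of X. -/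
open scoped BigOperators

/-!
The heart of the matter is to find, outside any finite-dimensional subspace `E` and inside any
finite-codimensional one, finite systems of unit-ball vectors which are minimal modulo `E` with a
constant close to `1`, but which have an absolutely convex combination of tiny norm. Such systems
are independent samples of an ultrafilter that is weakly null and almost orthogonal to everything:
either its `ℓ¹`-normalised blocks already come arbitrarily close to `0`, or by James' distortion
argument some block generates almost isometric copies of `ℓ¹`, where the rows of a Hadamard matrix
do the job.

Adding a small multiple of a vector `w ∈ E` to the members of such a system does not change their
functionals, but puts `w` almost in their span. Hence a biorthogonal system can be made fundamental
by adding members whose functionals all kill a fixed vector `v₀`, and, exchanging the roles of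
vectors and functionals, total by adding members whose vectors are all killed by a fixed
functional `φ₀`. Then every partial sum of `v₀`, in any order, lies in the kernel of `φ₀`. If
`φ₀ v₀ ≠ 0`, the partial sums of `v₀` do not converge to `v₀`, so that no ordering of the system has
bounded partial sum operators. Finally, `max ‖v‖ (sup |xₙ* v|)` is a renorming that turns the
system into an Auerbach basis.
-/


open Filter Topology

attribute [local instance] Ultrafilter.addSemigroup

section Types

variable {Z : Type*} [NormedAddCommGroup Z] {U V W : Ultrafilter Z}

/-- The type over `Z` realised by the ultrafilter `U` (in the sense of Krivine and Maurey):
the function `z ↦ lim_{w → U} ‖z + w‖`. It is meaningful only if `U` contains a bounded set. -/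
noncomputable def typeNorm (U : Ultrafilter Z) (z : Z) : ℝ :=
  limUnder (U : Filter Z) fun w => ‖z + w‖

theorem tendsto_typeNorm (hU : IsBoundedUnder (· ≤ ·) (U : Filter Z) norm) (z : Z) :
    Tendsto (fun w => ‖z + w‖) U (𝓝 (typeNorm U z)) := by
  obtain ⟨C, hC⟩ := hU
  obtain ⟨l, -, hl⟩ := (isCompact_Icc (a := 0) (b := ‖z‖ + C)).ultrafilter_le_nhds
    (U.map fun w => ‖z + w‖) <| le_principal_iff.2 <|
      (eventually_map.1 hC).mono fun w hw =>
        ⟨norm_nonneg _, (norm_add_le z w).trans (add_le_add_right hw _)⟩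
  exact tendsto_nhds_limUnder ⟨l, hl⟩

theorem typeNorm_nonneg (hU : IsBoundedUnder (· ≤ ·) (U : Filter Z) norm) (z : Z) :
    0 ≤ typeNorm U z :=
  ge_of_tendsto' (tendsto_typeNorm hU z) fun _ => norm_nonneg _

theorem typeNorm_le_add_norm_sub (hU : IsBoundedUnder (· ≤ ·) (U : Filter Z) norm) (y z : Z) :
    typeNorm U y ≤ typeNorm U z + ‖y - z‖ :=
  le_of_tendsto_of_tendsto' (tendsto_typeNorm hU y) ((tendsto_typeNorm hU z).add_const _)
    fun w => calc
      ‖y + w‖ = ‖(z + w) + (y - z)‖ := by congr 1; abel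
      _ ≤ ‖z + w‖ + ‖y - z‖ := norm_add_le _ _

theorem continuous_typeNorm (hU : IsBoundedUnder (· ≤ ·) (U : Filter Z) norm) :
    Continuous (typeNorm U) :=
  (LipschitzWith.of_le_add fun y z => by
    simpa [dist_eq_norm] using typeNorm_le_add_norm_sub hU y z).continuous

theorem isBoundedUnder_norm_add (hU : IsBoundedUnder (· ≤ ·) (U : Filter Z) norm)
    (hV : IsBoundedUnder (· ≤ ·) (V : Filter Z) norm) :
    IsBoundedUnder (· ≤ ·) ((U + V : Ultrafilter Z) : Filter Z) norm := by
  obtain ⟨⟨C, hC⟩, D, hD⟩ := hU, hV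
  refine ⟨C + D, ?_⟩
  exact (eventually_map.1 hC).mono fun u hu =>
    (eventually_map.1 hD).mono fun v hv => norm_add_le_of_le hu hv

theorem tendsto_typeNorm_add (hU : IsBoundedUnder (· ≤ ·) (U : Filter Z) norm)
    (hV : IsBoundedUnder (· ≤ ·) (V : Filter Z) norm) (z : Z) :
    Tendsto (fun u => typeNorm V (z + u)) U (𝓝 (typeNorm (U + V) z)) := by
  refine (closed_nhds_basis _).tendsto_right_iff.2 fun s ⟨hs, hclosed⟩ => ?_
  have hUV : ∀ᶠ u in U, ∀ᶠ v in V, ‖z + (u + v)‖ ∈ s :=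
    (tendsto_typeNorm (isBoundedUnder_norm_add hU hV) z).eventually hs
  filter_upwards [hUV] with u hu
  exact hclosed.mem_of_tendsto (tendsto_typeNorm hV (z + u)) (by simpa only [add_assoc] using hu)

theorem typeNorm_add_mono_right (hU : IsBoundedUnder (· ≤ ·) (U : Filter Z) norm)
    (hV : IsBoundedUnder (· ≤ ·) (V : Filter Z) norm)
    (hW : IsBoundedUnder (· ≤ ·) (W : Filter Z) norm) (h : typeNorm V ≤ typeNorm W) :
    typeNorm (U + V) ≤ typeNorm (U + W) := fun z =>
  le_of_tendsto_of_tendsto' (tendsto_typeNorm_add hU hV z) (tendsto_typeNorm_add hU hW z)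
    fun _ => h _

variable [NormedSpace ℝ Z]

theorem convexOn_typeNorm (hU : IsBoundedUnder (· ≤ ·) (U : Filter Z) norm) :
    ConvexOn ℝ Set.univ (typeNorm U) :=
  ⟨convex_univ, fun x _ y _ a b ha hb hab =>
    le_of_tendsto_of_tendsto' (tendsto_typeNorm hU _)
      (((tendsto_typeNorm hU x).const_mul a).add ((tendsto_typeNorm hU y).const_mul b)) fun w => by
        simpa using (convexOn_univ_norm.translate_left w).2 trivial trivial ha hb hab⟩

theorem two_mul_typeNorm_zero_le (hU : IsBoundedUnder (· ≤ ·) (U : Filter Z) norm) (z : Z) :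
    2 * typeNorm U 0 ≤ typeNorm U z + typeNorm U (-z) := by
  have h := (convexOn_typeNorm hU).2 (Set.mem_univ z) (Set.mem_univ (-z))
    (show (0 : ℝ) ≤ 1 / 2 by norm_num) (show (0 : ℝ) ≤ 1 / 2 by norm_num) (by norm_num)
  rw [smul_neg, add_neg_cancel, smul_eq_mul, smul_eq_mul] at h
  linarith

theorem typeNorm_map_smul (hU : IsBoundedUnder (· ≤ ·) (U : Filter Z) norm) (t : ℝ) (z : Z) :
    typeNorm (U.map (t • ·)) (t • z) = |t| * typeNorm U z := by
  refine Tendsto.limUnder_eq (tendsto_map'_iff.2 ?_)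
  simpa only [Function.comp_def, ← smul_add, norm_smul, Real.norm_eq_abs] using
    (tendsto_typeNorm hU z).const_mul |t|

theorem typeNorm_map_neg (hU : IsBoundedUnder (· ≤ ·) (U : Filter Z) norm) (z : Z) :
    typeNorm (U.map (-·)) z = typeNorm U (-z) := by
  simpa using typeNorm_map_smul hU (-1) (-z)

/-- A bounded null ultrafilter: it contains a bounded set and the kernel of every continuous
linear functional. It plays the role of a bounded weakly null sequence. -/
structure IsBoundedNull (U : Ultrafilter Z) : Prop where
  isBoundedUnder_norm : IsBoundedUnder (· ≤ ·) (U : Filter Z) norm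
  eventually_apply_eq_zero (f : Z →L[ℝ] ℝ) : ∀ᶠ w in (U : Filter Z), f w = 0

namespace IsBoundedNull

theorem pure_zero : IsBoundedNull (pure 0 : Ultrafilter Z) where
  isBoundedUnder_norm := ⟨0, by simp⟩
  eventually_apply_eq_zero f := by simp

theorem add (hU : IsBoundedNull U) (hV : IsBoundedNull V) : IsBoundedNull (U + V) where
  isBoundedUnder_norm := isBoundedUnder_norm_add hU.1 hV.1
  eventually_apply_eq_zero f :=
    (hU.2 f).mono fun u hu => (hV.2 f).mono fun v hv => by
      change f (u + v) = 0
      rw [map_add, hu, hv, add_zero]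

theorem map_clm {Y : Type*} [NormedAddCommGroup Y] [NormedSpace ℝ Y] (hU : IsBoundedNull U)
    (T : Z →L[ℝ] Y) : IsBoundedNull (U.map T) where
  isBoundedUnder_norm := by
    obtain ⟨C, hC⟩ := hU.1
    refine ⟨‖T‖ * C, (eventually_map.1 hC).mono fun w hw => ?_⟩
    exact T.le_opNorm_of_le hw
  eventually_apply_eq_zero f := hU.2 (f ∘L T)

theorem map_smul (hU : IsBoundedNull U) (t : ℝ) : IsBoundedNull (U.map (t • ·)) :=
  hU.map_clm (t • ContinuousLinearMap.id ℝ Z)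

theorem map_neg (hU : IsBoundedNull U) : IsBoundedNull (U.map (-·)) :=
  hU.map_clm (-ContinuousLinearMap.id ℝ Z)

-- The values at `z + w` dominate those of an affine minorant, which is unaffected by `w`.
theorem eventually_lt_of_convexOn (hU : IsBoundedNull U) {f : Z → ℝ}
    (hf : ConvexOn ℝ Set.univ f) (hcont : Continuous f) {z : Z} {a : ℝ} (ha : a < f z) :
    ∀ᶠ w in (U : Filter Z), a < f (z + w) := by
  obtain ⟨b, hab, hb⟩ := exists_between ha
  obtain ⟨l, c, hle, heq⟩ := ConvexOn.exists_affine_le_of_lt (𝕜 := ℝ) (Set.mem_univ z) hb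
    isClosed_univ (hcont.lowerSemicontinuous.lowerSemicontinuousOn _) hf
  filter_upwards [hU.2 l] with w hw
  have h : l (z + w) + c ≤ f (z + w) := hle ⟨z + w, trivial⟩
  rw [map_add, hw, add_zero] at h
  exact hab.trans_le (heq.symm.le.trans h)

theorem typeNorm_le_typeNorm_add_left (hU : IsBoundedNull U)
    (hV : IsBoundedUnder (· ≤ ·) (V : Filter Z) norm) : typeNorm V ≤ typeNorm (U + V) := fun z =>
  le_of_forall_lt_imp_le_of_dense fun _ ha => ge_of_tendsto (tendsto_typeNorm_add hU.1 hV z) <|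
    (hU.eventually_lt_of_convexOn (convexOn_typeNorm hV) (continuous_typeNorm hV) ha).mono
      fun _ => le_of_lt

theorem norm_le_typeNorm (hU : IsBoundedNull U) (z : Z) : ‖z‖ ≤ typeNorm U z :=
  le_of_forall_lt_imp_le_of_dense fun _ ha => ge_of_tendsto (tendsto_typeNorm hU.1 z) <|
    (hU.eventually_lt_of_convexOn convexOn_univ_norm continuous_norm ha).mono fun _ => le_of_lt

theorem typeNorm_le_typeNorm_add_right (hU : IsBoundedNull U) (hV : IsBoundedNull V) :
    typeNorm U ≤ typeNorm (U + V) := fun z =>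
  le_of_tendsto_of_tendsto' (tendsto_typeNorm hU.1 z) (tendsto_typeNorm_add hU.1 hV.1 z)
    fun _ => hV.norm_le_typeNorm _

theorem typeNorm_add_map_neg_zero_le (hU : IsBoundedNull U) (z : Z) :
    typeNorm (U + U.map (-·)) 0 ≤ 2 * typeNorm U z := by
  rw [two_mul]
  refine le_of_tendsto_of_tendsto' (tendsto_typeNorm_add hU.1 hU.map_neg.1 0)
    ((tendsto_typeNorm hU.1 z).add_const (typeNorm U z)) fun w => ?_
  calc
    typeNorm (U.map (-·)) (0 + w) = typeNorm U (-w) := by rw [zero_add, typeNorm_map_neg hU.1]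
    _ ≤ typeNorm U z + ‖-w - z‖ := typeNorm_le_add_norm_sub hU.1 _ _
    _ = ‖z + w‖ + typeNorm U z := by rw [add_comm, ← norm_neg]; congr 2; abel

end IsBoundedNull

end Types

section AlmostOrthogonal

theorem exists_mul_succ_lt_of_succ_le_add_one {T : ℕ → ℝ} (h0 : 0 < T 0)
    (hT : ∀ n, T (n + 1) ≤ T n + 1) {r : ℝ} (hr0 : 0 < r) (hr1 : r < 1) :
    ∃ n, r * T (n + 1) < T n := by
  by_contra! h
  have hbound (n : ℕ) : T n ≤ r / (1 - r) := by
    rw [le_div_iff₀ (sub_pos.2 hr1)]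
    linarith [h n, mul_le_mul_of_nonneg_left (hT n) hr0.le]
  have hgrowth (n : ℕ) : T 0 ≤ r ^ n * T n := by
    induction n with
    | zero => simp
    | succ n ih =>
      rw [pow_succ, mul_assoc]
      exact ih.trans (mul_le_mul_of_nonneg_left (h n) (by positivity))
  have hlim : Tendsto (fun n => r ^ n * (r / (1 - r))) atTop (𝓝 0) := by
    simpa using (tendsto_pow_atTop_nhds_zero_of_lt_one hr0.le hr1).mul_const (r / (1 - r))
  exact h0.not_ge <| ge_of_tendsto' hlim fun n =>
    (hgrowth n).trans (mul_le_mul_of_nonneg_left (hbound n) (by positivity))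

variable {Z : Type*} [NormedAddCommGroup Z] [NormedSpace ℝ Z] {V : Ultrafilter Z}

theorem exists_norm_eq_one_forall_apply_eq_zero (hZ : ¬ FiniteDimensional ℝ Z)
    (G : Finset (Z →L[ℝ] ℝ)) : ∃ w : Z, ‖w‖ = 1 ∧ ∀ f ∈ G, f w = 0 := by
  let T : Z →ₗ[ℝ] (G → ℝ) := LinearMap.pi fun f => (f : Z →L[ℝ] ℝ).toLinearMap
  obtain ⟨w, hw, hw0⟩ := (Submodule.ne_bot_iff _).1 fun h =>
    hZ (Module.Finite.of_injective T (LinearMap.ker_eq_bot.1 h))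
  refine ⟨‖w‖⁻¹ • w, by simpa using norm_smul_inv_norm (𝕜 := ℝ) hw0, fun f hf => ?_⟩
  have hfw : f w = 0 := congrFun hw ⟨f, hf⟩
  rw [map_smul, hfw, smul_zero]

theorem exists_isBoundedNull_norm_eq_one (hZ : ¬ FiniteDimensional ℝ Z) :
    ∃ V : Ultrafilter Z, IsBoundedNull V ∧ ∀ᶠ w in (V : Filter Z), ‖w‖ = 1 := by
  choose w hw1 hw0 using exists_norm_eq_one_forall_apply_eq_zero hZ
  let V : Ultrafilter Z := (Ultrafilter.of atTop).map w
  have hV {p : Z → Prop} (h : ∀ᶠ G in atTop, p (w G)) : ∀ᶠ z in (V : Filter Z), p z :=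
    Ultrafilter.of_le _ h
  refine ⟨V, ⟨⟨1, hV (.of_forall fun G => (hw1 G).le)⟩, fun f => hV ?_⟩, hV (.of_forall hw1)⟩
  filter_upwards [eventually_ge_atTop {f}] with G hG
  exact hw0 G f (hG (Finset.mem_singleton_self f))

theorem eventually_norm_map_inv_smul_le_one
    (hV : IsBoundedUnder (· ≤ ·) (V : Filter Z) norm) {τ : ℝ} (hτ : typeNorm V 0 < τ) :
    ∀ᶠ w in (V.map (τ⁻¹ • ·) : Filter Z), ‖w‖ ≤ 1 := by
  have hτ0 : 0 < τ := (typeNorm_nonneg hV 0).trans_lt hτ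
  refine eventually_map.2 (((tendsto_typeNorm hV 0).eventually_lt_const hτ).mono fun w hw => ?_)
  rw [zero_add] at hw
  rw [norm_smul, norm_inv, Real.norm_of_nonneg hτ0.le]
  exact inv_mul_le_one_of_le₀ hw.le hτ0.le

/-- The alternating sum `V - V + V - ⋯` of `n + 1` independent copies of the ultrafilter `V`. -/
def alternatingSum (V : Ultrafilter Z) : ℕ → Ultrafilter Z
  | 0 => V
  | n + 1 => V + (alternatingSum V n).map (-·)

theorem isBoundedNull_alternatingSum (hV : IsBoundedNull V) (n : ℕ) :
    IsBoundedNull (alternatingSum V n) := by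
  induction n with
  | zero => exact hV
  | succ n ih => exact hV.add ih.map_neg

theorem monotone_typeNorm_alternatingSum (hV : IsBoundedNull V) :
    Monotone fun n => typeNorm (alternatingSum V n) := by
  have hA (n : ℕ) := isBoundedNull_alternatingSum hV n
  refine monotone_nat_of_le_succ fun n => ?_
  induction n with
  | zero => exact hV.typeNorm_le_typeNorm_add_right hV.map_neg
  | succ n ih =>
    refine typeNorm_add_mono_right hV.1 (hA n).map_neg.1 (hA (n + 1)).map_neg.1 fun z => ?_
    rw [typeNorm_map_neg (hA n).1, typeNorm_map_neg (hA (n + 1)).1]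
    exact ih (-z)

theorem typeNorm_alternatingSum_zero_le (hV : IsBoundedNull V) (n : ℕ) (z : Z) :
    typeNorm (alternatingSum V n) 0 ≤ typeNorm (alternatingSum V (n + 1)) z := by
  have hA := isBoundedNull_alternatingSum hV n
  have hpos : typeNorm (alternatingSum V n) z ≤ typeNorm (alternatingSum V (n + 1)) z :=
    monotone_typeNorm_alternatingSum hV n.le_succ z
  have hneg : typeNorm (alternatingSum V n) (-z) ≤ typeNorm (alternatingSum V (n + 1)) z := by
    rw [← typeNorm_map_neg hA.1]
    exact hV.typeNorm_le_typeNorm_add_left hA.map_neg.1 z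
  linarith [two_mul_typeNorm_zero_le hA.1 z]

theorem typeNorm_alternatingSum_succ_zero_le (hV : IsBoundedNull V)
    (hV1 : ∀ᶠ w in (V : Filter Z), ‖w‖ = 1) (n : ℕ) :
    typeNorm (alternatingSum V (n + 1)) 0 ≤ typeNorm (alternatingSum V n) 0 + 1 := by
  have hA := isBoundedNull_alternatingSum hV n
  refine le_of_tendsto (tendsto_typeNorm_add hV.1 hA.map_neg.1 0) (hV1.mono fun w hw => ?_)
  rw [typeNorm_map_neg hA.1]
  simpa [hw] using typeNorm_le_add_norm_sub hA.1 (-(0 + w)) 0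

-- Some normalised alternating sum works: its type at `0` grows by at most `1` at each step, so it
-- cannot grow geometrically.
theorem exists_isBoundedNull_le_typeNorm (hZ : ¬ FiniteDimensional ℝ Z) {r : ℝ} (hr0 : 0 < r)
    (hr1 : r < 1) : ∃ U : Ultrafilter Z, IsBoundedNull U ∧ (∀ᶠ w in (U : Filter Z), ‖w‖ ≤ 1) ∧
      ∀ z, r ≤ typeNorm U z := by
  obtain ⟨V, hV, hV1⟩ := exists_isBoundedNull_norm_eq_one hZ
  have hV0 : typeNorm V 0 = 1 :=
    (tendsto_const_nhds.congr' (hV1.mono fun w hw => by rw [zero_add, hw])).limUnder_eq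
  obtain ⟨n, hn⟩ := exists_mul_succ_lt_of_succ_le_add_one
    (T := fun n => typeNorm (alternatingSum V n) 0) (hV0.symm ▸ one_pos)
    (typeNorm_alternatingSum_succ_zero_le hV hV1) hr0 hr1
  have hA := isBoundedNull_alternatingSum hV (n + 1)
  obtain ⟨τ, hτ⟩ : ∃ τ, typeNorm (alternatingSum V n) 0 = r * τ :=
    ⟨_, (mul_div_cancel₀ _ hr0.ne').symm⟩
  have hAτ : typeNorm (alternatingSum V (n + 1)) 0 < τ := lt_of_mul_lt_mul_left (hτ ▸ hn) hr0.le
  have hτ0 : 0 < τ := (typeNorm_nonneg hA.1 0).trans_lt hAτ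
  refine ⟨_, hA.map_smul τ⁻¹, eventually_norm_map_inv_smul_le_one hA.1 hAτ, fun z => ?_⟩
  calc
    r = τ⁻¹ * typeNorm (alternatingSum V n) 0 := by rw [hτ]; field_simp
    _ ≤ τ⁻¹ * typeNorm (alternatingSum V (n + 1)) (τ • z) := by
      gcongr
      exact typeNorm_alternatingSum_zero_le hV n _
    _ = typeNorm ((alternatingSum V (n + 1)).map (τ⁻¹ • ·)) z := by
      rw [← abs_of_pos (inv_pos.2 hτ0), ← typeNorm_map_smul hA.1, abs_of_pos (inv_pos.2 hτ0),
        inv_smul_smul₀ hτ0.ne']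

end AlmostOrthogonal

section BlockLaw

/-- The `ℓ¹` norm of a finite sequence. -/
def absSum (c : List ℝ) : ℝ := (c.map (|·|)).sum

@[simp] theorem absSum_nil : absSum [] = 0 := rfl

@[simp] theorem absSum_cons (a : ℝ) (c : List ℝ) : absSum (a :: c) = |a| + absSum c :=
  List.sum_cons

@[simp] theorem absSum_append (b c : List ℝ) : absSum (b ++ c) = absSum b + absSum c := by
  simp [absSum]

@[simp] theorem absSum_map_mul (t : ℝ) (c : List ℝ) : absSum (c.map (t * ·)) = |t| * absSum c := by
  simp [absSum, Function.comp_def, abs_mul, List.sum_map_mul_left]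

theorem absSum_nonneg (c : List ℝ) : 0 ≤ absSum c :=
  List.sum_nonneg (by simp)

theorem absSum_flatMap_map_mul (b q : List ℝ) :
    absSum (b.flatMap fun t => q.map (t * ·)) = absSum b * absSum q := by
  induction b with
  | nil => simp
  | cons t b ih => simp [ih, add_mul]

variable {Z : Type*} [NormedAddCommGroup Z]

theorem pure_zero_add (U : Ultrafilter Z) : pure 0 + U = U :=
  Ultrafilter.coe_inj.1 <| Filter.ext' fun p => by simp [Ultrafilter.eventually_add]

variable [NormedSpace ℝ Z]

theorem map_smul_add (U V : Ultrafilter Z) (t : ℝ) :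
    (U + V).map (t • ·) = U.map (t • ·) + V.map (t • ·) :=
  Ultrafilter.coe_inj.1 <| Filter.ext' fun p => by simp [Ultrafilter.eventually_add]

/-- The distribution of `∑ i, b i • w i` for independent variables `w i` with law `V`: the
ultrafilter sum of the scaled copies of `V`. -/
def blockLaw (V : Ultrafilter Z) : List ℝ → Ultrafilter Z
  | [] => pure 0
  | t :: b => V.map (t • ·) + blockLaw V b

variable {V : Ultrafilter Z}

theorem blockLaw_append (b c : List ℝ) : blockLaw V (b ++ c) = blockLaw V b + blockLaw V c := by
  induction b with
  | nil => exact (pure_zero_add _).symm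
  | cons t b ih => rw [List.cons_append, blockLaw, ih, ← add_assoc, blockLaw]

theorem map_smul_blockLaw (t : ℝ) (b : List ℝ) :
    (blockLaw V b).map (t • ·) = blockLaw V (b.map (t * ·)) := by
  induction b with
  | nil => simp [blockLaw]
  | cons s b ih =>
    rw [blockLaw, map_smul_add, ih, List.map_cons, blockLaw, Ultrafilter.map_map]
    simp only [Function.comp_def, smul_smul]

theorem blockLaw_blockLaw (q b : List ℝ) :
    blockLaw (blockLaw V q) b = blockLaw V (b.flatMap fun t => q.map (t * ·)) := by
  induction b with
  | nil => rfl
  | cons t b ih => rw [blockLaw, ih, map_smul_blockLaw, List.flatMap_cons, blockLaw_append]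

theorem isBoundedNull_blockLaw (hV : IsBoundedNull V) (b : List ℝ) :
    IsBoundedNull (blockLaw V b) := by
  induction b with
  | nil => exact .pure_zero
  | cons t b ih => exact (hV.map_smul t).add ih

theorem typeNorm_blockLaw_map_mul (hV : IsBoundedNull V) (t : ℝ) (b : List ℝ) (z : Z) :
    typeNorm (blockLaw V (b.map (t * ·))) (t • z) = |t| * typeNorm (blockLaw V b) z := by
  rw [← map_smul_blockLaw, typeNorm_map_smul (isBoundedNull_blockLaw hV b).1]

theorem abs_mul_le_typeNorm_blockLaw (hV : IsBoundedNull V) {r : ℝ} (hr : ∀ z, r ≤ typeNorm V z)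
    {t : ℝ} {b : List ℝ} (ht : t ∈ b) (z : Z) : |t| * r ≤ typeNorm (blockLaw V b) z := by
  induction b with
  | nil => simp at ht
  | cons s b ih =>
    have hb := isBoundedNull_blockLaw hV b
    rcases List.mem_cons.1 ht with rfl | ht
    · refine le_trans ?_ ((hV.map_smul t).typeNorm_le_typeNorm_add_right hb z)
      rcases eq_or_ne t 0 with rfl | ht0
      · simpa using typeNorm_nonneg (hV.map_smul 0).1 z
      · rw [← smul_inv_smul₀ ht0 z, typeNorm_map_smul hV.1]
        exact mul_le_mul_of_nonneg_left (hr _) (abs_nonneg t)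
    · exact (ih ht).trans ((hV.map_smul s).typeNorm_le_typeNorm_add_left hb.1 z)

-- The difference of two independent copies of the block no longer sees the shift `z`.
theorem exists_typeNorm_blockLaw_zero_lt (hV : IsBoundedNull V) {a : ℝ} {c : List ℝ} {z : Z}
    (h : typeNorm (blockLaw V c) z < a * absSum c) :
    ∃ q, absSum q = 1 ∧ typeNorm (blockLaw V q) 0 < a := by
  have hc := isBoundedNull_blockLaw hV c
  have hc0 : 0 < absSum c := (absSum_nonneg c).lt_of_ne' fun h0 => by
    simpa [h0] using (typeNorm_nonneg hc.1 z).trans_lt h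
  set d := c ++ c.map (-1 * ·)
  have hd : absSum d = 2 * absSum c := by
    rw [absSum_append, absSum_map_mul, abs_neg, abs_one, one_mul, two_mul]
  have hlaw : blockLaw V d = blockLaw V c + (blockLaw V c).map (-·) := by
    rw [blockLaw_append, ← map_smul_blockLaw]
    simp only [neg_one_smul]
  have hd0 : typeNorm (blockLaw V d) 0 < a * absSum d := by
    rw [hlaw, hd]
    linarith [hc.typeNorm_add_map_neg_zero_le z]
  have hdpos : 0 < absSum d := by linarith
  refine ⟨d.map ((absSum d)⁻¹ * ·), ?_, ?_⟩
  · rw [absSum_map_mul, abs_of_pos (inv_pos.2 hdpos), inv_mul_cancel₀ hdpos.ne']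
  · rw [← smul_zero (absSum d)⁻¹, typeNorm_blockLaw_map_mul hV, abs_of_pos (inv_pos.2 hdpos)]
    rwa [inv_mul_lt_iff₀ hdpos, mul_comm]

-- James' `ℓ¹` distortion argument: if `d` is nearly the best constant for `V`, then a normalised
-- block nearly attaining it generates `ℓ¹` almost isometrically.
theorem exists_mul_absSum_le_typeNorm_blockLaw (hV : IsBoundedNull V) {E : Set Z}
    (hE : E.Nonempty) {δ : ℝ} (hδ : 0 < δ)
    (h : ∀ b, ∀ e ∈ E, δ * absSum b ≤ typeNorm (blockLaw V b) e) {r : ℝ} (hr0 : 0 < r)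
    (hr1 : r < 1) :
    ∃ U : Ultrafilter Z, IsBoundedNull U ∧ (∀ᶠ w in (U : Filter Z), ‖w‖ ≤ 1) ∧
      ∀ b, ∀ e ∈ E, r * absSum b ≤ typeNorm (blockLaw U b) e := by
  let S : Set ℝ := {d | ∀ b, ∀ e ∈ E, d * absSum b ≤ typeNorm (blockLaw V b) e}
  obtain ⟨e₀, he₀⟩ := hE
  have hS : BddAbove S := ⟨typeNorm (blockLaw V [1]) e₀, fun d hd => by
    simpa using hd [1] e₀ he₀⟩
  have hsup : 0 < sSup S := hδ.trans_le (le_csSup hS h)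
  obtain ⟨d, hd, hdr⟩ : ∃ d ∈ S, r * sSup S < d :=
    exists_lt_of_lt_csSup ⟨δ, h⟩ (mul_lt_of_lt_one_left hsup hr1)
  have hd0 : 0 < d := (mul_pos hr0 hsup).trans hdr
  have hdS : d / r ∉ S := notMem_of_csSup_lt ((lt_div_iff₀' hr0).2 hdr) hS
  obtain ⟨c, e, -, hce⟩ : ∃ c, ∃ e ∈ E, typeNorm (blockLaw V c) e < d / r * absSum c := by
    simpa [S] using hdS
  obtain ⟨q, hq1, hq⟩ := exists_typeNorm_blockLaw_zero_lt hV hce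
  have hqV := isBoundedNull_blockLaw hV q
  refine ⟨_, hqV.map_smul (d / r)⁻¹, eventually_norm_map_inv_smul_le_one hqV.1 hq,
    fun b e he => ?_⟩
  rw [map_smul_blockLaw, blockLaw_blockLaw]
  refine le_of_eq_of_le ?_ (hd _ e he)
  rw [absSum_flatMap_map_mul, absSum_map_mul, hq1, mul_one, abs_of_pos (by positivity)]
  field_simp

end BlockLaw

section Extraction

variable {Z : Type*}

/-- The law of `N` independent variables with law `V`. -/
def ultraPow (V : Ultrafilter Z) : (N : ℕ) → Ultrafilter (Fin N → Z)
  | 0 => pure ![]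
  | N + 1 => V.bind fun w => (ultraPow V N).map (Matrix.vecCons w)

theorem eventually_ultraPow_succ {V : Ultrafilter Z} {N : ℕ} {p : (Fin (N + 1) → Z) → Prop} :
    (∀ᶠ ω in (ultraPow V (N + 1) : Filter (Fin (N + 1) → Z)), p ω) ↔
      ∀ᶠ w in (V : Filter Z), ∀ᶠ ω in (ultraPow V N : Filter (Fin N → Z)),
        p (Matrix.vecCons w ω) :=
  Iff.rfl

theorem eventually_ultraPow_forall {V : Ultrafilter Z} {p : Z → Prop}
    (hp : ∀ᶠ w in (V : Filter Z), p w) (N : ℕ) :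
    ∀ᶠ ω in (ultraPow V N : Filter (Fin N → Z)), ∀ i, p (ω i) := by
  induction N with
  | zero => exact .of_forall fun _ i => i.elim0
  | succ N ih =>
    exact eventually_ultraPow_succ.2 <| hp.mono fun w hw => ih.mono fun ω hω =>
      Fin.forall_fin_succ.2 ⟨hw, hω⟩

variable [NormedAddCommGroup Z] [NormedSpace ℝ Z]

theorem eventually_forall_mul_le_norm {F ι : Type*} [NormedAddCommGroup F] [NormedSpace ℝ F]
    [FiniteDimensional ℝ F] {l : Filter ι} [l.NeBot] {T : ι → F →ₗ[ℝ] Z} {p : F → ℝ} {C : ℝ}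
    (hC : ∀ᶠ i in l, ∀ x, ‖T i x‖ ≤ C * ‖x‖)
    (hT : ∀ x, Tendsto (fun i => ‖T i x‖) l (𝓝 (p x))) (hp : ∀ x ≠ 0, 0 < p x)
    {r : ℝ} (hr : r < 1) : ∀ᶠ i in l, ∀ x, r * p x ≤ ‖T i x‖ := by
  have hsmul (a : ℝ) (x : F) : p (a • x) = |a| * p x :=
    tendsto_nhds_unique (hT (a • x)) <| by
      simpa only [map_smul, norm_smul, Real.norm_eq_abs] using (hT x).const_mul |a|
  have hdiff : ∀ᶠ i in l, ∀ x y, |‖T i x‖ - ‖T i y‖| ≤ C * ‖x - y‖ := hC.mono fun i hi x y =>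
    (abs_norm_sub_norm_le _ _).trans (by simpa only [map_sub] using hi (x - y))
  have hlim (x : F) : Tendsto (fun y => C * ‖y - x‖) (𝓝 x) (𝓝 0) :=
    (by fun_prop : Continuous fun y => C * ‖y - x‖).tendsto' _ _ (by simp)
  have hcont : Continuous p := continuous_iff_continuousAt.2 fun x => by
    refine tendsto_iff_dist_tendsto_zero.2 <|
      squeeze_zero (fun _ => dist_nonneg) (fun y => ?_) (hlim x)
    exact le_of_tendsto (((hT y).sub (hT x)).abs) (hdiff.mono fun i hi => hi y x)
  have hjoint (x : F) : Tendsto (fun z : ι × F => ‖T z.1 z.2‖) (l ×ˢ 𝓝 x) (𝓝 (p x)) := by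
    have hfst : Tendsto (fun z : ι × F => ‖T z.1 x‖) (l ×ˢ 𝓝 x) (𝓝 (p x)) :=
      (hT x).comp tendsto_fst
    refine hfst.congr_dist <|
      squeeze_zero' (.of_forall fun _ => dist_nonneg) ?_ ((hlim x).comp tendsto_snd)
    filter_upwards [tendsto_fst.eventually hdiff] with z hz
    rw [dist_comm]
    exact hz z.2 x
  have hsphere : ∀ᶠ z in l ×ˢ 𝓝ˢ (Metric.sphere (0 : F) 1), r * p z.2 < ‖T z.1 z.2‖ :=
    (isCompact_sphere 0 1).mem_prod_nhdsSet_of_forall fun x hx =>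
      (((hcont.tendsto x).comp tendsto_snd).const_mul r).eventually_lt (hjoint x) <|
        mul_lt_of_lt_one_left (hp x (ne_zero_of_mem_unit_sphere ⟨x, hx⟩)) hr
  filter_upwards [hsphere.curry] with i hi x
  rcases eq_or_ne x 0 with rfl | hx
  · rw [show p 0 = 0 by simpa using hsmul 0 0, mul_zero]
    exact norm_nonneg _
  · have hx0 := norm_pos_iff.2 hx
    have hu := (hi.self_of_nhdsSet _ (by simp [norm_smul, hx0.ne'] : ‖x‖⁻¹ • x ∈ _)).le
    rw [hsmul, map_smul, norm_smul, norm_inv, norm_norm, abs_of_pos (inv_pos.2 hx0),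
      mul_left_comm] at hu
    exact le_of_mul_le_mul_left hu (inv_pos.2 hx0)

theorem map_sum_smul_ultraPow (V : Ultrafilter Z) {N : ℕ} (b : Fin N → ℝ) :
    (ultraPow V N).map (fun ω => ∑ i, b i • ω i) = blockLaw V (List.ofFn b) := by
  induction N with
  | zero => simp [ultraPow, blockLaw]
  | succ N ih =>
    rw [List.ofFn_succ, blockLaw, ← ih]
    refine Ultrafilter.coe_inj.1 (Filter.ext' fun p => ?_)
    simp [Ultrafilter.eventually_add, eventually_ultraPow_succ, Fin.sum_univ_succ]

theorem tendsto_norm_add_sum_ultraPow {V : Ultrafilter Z} (hV : IsBoundedNull V) {N : ℕ}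
    (b : Fin N → ℝ) (z : Z) :
    Tendsto (fun ω : Fin N → Z => ‖z + ∑ i, b i • ω i‖) (ultraPow V N)
      (𝓝 (typeNorm (blockLaw V (List.ofFn b)) z)) := by
  have h := tendsto_typeNorm (isBoundedNull_blockLaw hV (List.ofFn b)).1 z
  rw [← map_sum_smul_ultraPow] at h ⊢
  exact tendsto_map'_iff.1 h

theorem eventually_ultraPow_mul_le_norm {V : Ultrafilter Z} (hV : IsBoundedNull V)
    (E : Submodule ℝ Z) [FiniteDimensional ℝ E] {N : ℕ}
    (hpos : ∀ b : Fin N → ℝ, b ≠ 0 → ∀ e ∈ E, 0 < typeNorm (blockLaw V (List.ofFn b)) e)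
    {r : ℝ} (hr : r < 1) :
    ∀ᶠ ω in (ultraPow V N : Filter (Fin N → Z)), ∀ e ∈ E, ∀ b : Fin N → ℝ,
      r * typeNorm (blockLaw V (List.ofFn b)) e ≤ ‖e + ∑ i, b i • ω i‖ := by
  obtain ⟨C, hC⟩ := hV.1
  let T (ω : Fin N → Z) : E × (Fin N → ℝ) →ₗ[ℝ] Z :=
    E.subtype.coprod (Fintype.linearCombination ℝ ω)
  have hT (ω : Fin N → Z) (x : E × (Fin N → ℝ)) : T ω x = x.1 + ∑ i, x.2 i • ω i := rfl
  have hle : ∀ᶠ ω in (ultraPow V N : Filter (Fin N → Z)), ∀ x, ‖T ω x‖ ≤ (1 + N * C) * ‖x‖ := by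
    filter_upwards [eventually_ultraPow_forall (eventually_map.1 hC) N] with ω hω x
    calc
      ‖T ω x‖ ≤ ‖x.1‖ + ∑ i, ‖x.2 i • ω i‖ := by
        rw [hT]
        exact norm_add_le_of_le le_rfl (norm_sum_le _ _)
      _ ≤ ‖x‖ + ∑ _i : Fin N, ‖x‖ * C := by
        gcongr with i
        · exact norm_fst_le x
        · rw [norm_smul]
          gcongr
          · exact (norm_le_pi_norm x.2 i).trans (norm_snd_le x)
          · exact hω i
      _ = (1 + N * C) * ‖x‖ := by
        rw [Finset.sum_const, Finset.card_univ, Fintype.card_fin, nsmul_eq_mul]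
        ring
  have hpT (x : E × (Fin N → ℝ)) (hx : x ≠ 0) :
      0 < typeNorm (blockLaw V (List.ofFn x.2)) (x.1 : Z) := by
    rcases eq_or_ne x.2 0 with hb | hb
    · refine (norm_pos_iff.2 fun h0 => hx ?_).trans_le
        ((isBoundedNull_blockLaw hV _).norm_le_typeNorm _)
      exact Prod.ext (Subtype.ext h0) hb
    · exact hpos x.2 hb x.1 x.1.2
  filter_upwards [eventually_forall_mul_le_norm hle
    (fun x => tendsto_norm_add_sum_ultraPow hV x.2 (x.1 : Z)) hpT hr] with ω hω e he b
  exact hω (⟨e, he⟩, b)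

end Extraction

section SmallBlock

theorem isHadamard_sylvester_two : (!![1, 1; 1, -1] : Matrix (Fin 2) (Fin 2) ℝ).IsHadamard := by
  refine ⟨fun i j => ?_, ?_, ?_⟩
  · rw [Unitary.mem_iff]
    fin_cases i <;> fin_cases j <;> simp
  all_goals
    ext i j
    fin_cases i <;> fin_cases j <;> simp [Matrix.mul_apply] <;> norm_num

theorem exists_isHadamard_two_pow (k : ℕ) :
    ∃ A : Matrix (Fin (2 ^ k)) (Fin (2 ^ k)) ℝ, A.IsHadamard := by
  induction k with
  | zero =>
    refine ⟨1, ?_⟩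
    constructor <;> simp [Matrix.one_apply, Fin.fin_one_eq_zero, one_mem]
  | succ k ih =>
    obtain ⟨A, hA⟩ := ih
    let e : Fin (2 ^ k) × Fin 2 ≃ Fin (2 ^ (k + 1)) :=
      finProdFinEquiv.trans (finCongr (pow_succ 2 k).symm)
    exact ⟨_, (hA.kronecker isHadamard_sylvester_two).reindex e e⟩

variable {Z : Type*} [NormedAddCommGroup Z] [NormedSpace ℝ Z] {E : Submodule ℝ Z}
  {G : Finset (Z →L[ℝ] ℝ)} {K δ : ℝ}

/-- The coordinate functionals of the finite system `y` have norm at most `K` on the span of `E`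
and `y`; quantitatively, `y` is minimal modulo `E`. -/
def UniformlyMinimalMod (E : Submodule ℝ Z) (K : ℝ) {N : ℕ} (y : Fin N → Z) : Prop :=
  ∀ e ∈ E, ∀ (b : Fin N → ℝ) (j : Fin N), |b j| ≤ K * ‖e + ∑ i, b i • y i‖

/-- The unit ball of the common kernel of `G` contains a finite system which is minimal modulo `E`
with constant `K`, but has an absolutely convex combination of norm at most `δ`. -/
def HasSmallBlock (E : Submodule ℝ Z) (G : Finset (Z →L[ℝ] ℝ)) (K δ : ℝ) : Prop :=
  ∃ (N : ℕ) (y : Fin N → Z) (c : Fin N → ℝ), (∀ j, ‖y j‖ ≤ 1) ∧ (∀ j, ∀ g ∈ G, g (y j) = 0) ∧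
    UniformlyMinimalMod E K y ∧ ∑ j, |c j| = 1 ∧ ‖∑ j, c j • y j‖ ≤ δ

theorem sum_smul_sum_smul_eq_sum_vecMul_smul {N : ℕ} (A : Matrix (Fin N) (Fin N) ℝ)
    (b : Fin N → ℝ) (z : Fin N → Z) :
    ∑ j, b j • ∑ i, A j i • z i = ∑ i, Matrix.vecMul b A i • z i := by
  simp only [Finset.smul_sum, smul_smul, Matrix.vecMul, dotProduct, Finset.sum_smul]
  exact Finset.sum_comm

theorem abs_apply_of_isHadamard {N : ℕ} {A : Matrix (Fin N) (Fin N) ℝ} (hA : A.IsHadamard)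
    (i j : Fin N) : |A i j| = 1 := by
  have h := (Unitary.mem_iff.1 (hA.apply_mem i j)).1
  rw [star_trivial] at h
  exact (abs_eq zero_le_one).2 (mul_self_eq_one_iff.1 h)

theorem eq_sum_vecMul_mul_of_isHadamard {N : ℕ} [NeZero N] {A : Matrix (Fin N) (Fin N) ℝ}
    (hA : A.IsHadamard) (b : Fin N → ℝ) (j : Fin N) :
    b j = ∑ i, (N : ℝ)⁻¹ * Matrix.vecMul b A i * A j i := by
  have h := congrFun (congrArg (Matrix.vecMul b) hA.mul_conjTranspose) j
  rw [← Matrix.vecMul_vecMul] at h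
  have hN : ∑ i, Matrix.vecMul b A i * A j i = N * b j := by
    simpa [Matrix.vecMul_smul, Matrix.vecMul_eq_sum (v := Matrix.vecMul b A)] using h
  simp only [mul_assoc, ← Finset.mul_sum, hN, inv_mul_cancel_left₀ (NeZero.ne (N : ℝ))]

theorem vecMul_col_of_isHadamard {N : ℕ} {A : Matrix (Fin N) (Fin N) ℝ} (hA : A.IsHadamard)
    (k : Fin N) : Matrix.vecMul (fun j => A j k) A = Pi.single k (N : ℝ) := by
  ext i
  have h := congrFun (congrFun hA.conjTranspose_mul k) i
  simp only [Matrix.mul_apply, Matrix.conjTranspose_apply, star_trivial, Matrix.smul_apply,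
    Matrix.one_apply, Fintype.card_fin, smul_eq_mul] at h
  simp only [Matrix.vecMul, dotProduct, h, Pi.single_apply, eq_comm (a := i), mul_ite, mul_one,
    mul_zero]

-- In `ℓ₁ᴺ` the normalised rows of a Hadamard matrix are minimal with constant `1`, because its
-- normalised inverse has entries `± 1`, and the average of the rows with the signs of a column is
-- `N⁻¹` times a unit vector.
theorem hasSmallBlock_of_sum_abs_le {N : ℕ} [NeZero N] {A : Matrix (Fin N) (Fin N) ℝ}
    (hA : A.IsHadamard) {z : Fin N → Z} (hz1 : ∀ i, ‖z i‖ ≤ 1) (hzG : ∀ i, ∀ g ∈ G, g (z i) = 0)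
    (hz : ∀ e ∈ E, ∀ b : Fin N → ℝ, ∑ i, |b i| ≤ K * ‖e + ∑ i, b i • z i‖) :
    HasSmallBlock E G K (N : ℝ)⁻¹ := by
  have hN : (0 : ℝ) < N := Nat.cast_pos.2 (NeZero.pos N)
  have habs := abs_apply_of_isHadamard hA
  have hblock (b : Fin N → ℝ) : ∑ j, b j • (N : ℝ)⁻¹ • ∑ i, A j i • z i =
      ∑ i, ((N : ℝ)⁻¹ * Matrix.vecMul b A i) • z i := by
    simp only [smul_comm _ (N : ℝ)⁻¹, ← Finset.smul_sum, sum_smul_sum_smul_eq_sum_vecMul_smul,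
      mul_smul]
  refine ⟨N, fun j => (N : ℝ)⁻¹ • ∑ i, A j i • z i, fun j => (N : ℝ)⁻¹ * A j 0, fun j => ?_,
    fun j g hg => ?_, fun e he b j => ?_, ?_, ?_⟩
  · rw [norm_smul, norm_inv, Real.norm_of_nonneg hN.le, inv_mul_le_iff₀ hN, mul_one]
    refine (norm_sum_le_of_le (n := fun _ => (1 : ℝ)) _ fun i _ => ?_).trans_eq (by simp)
    rw [norm_smul, Real.norm_eq_abs, habs, one_mul]
    exact hz1 i
  · simp only [map_smul, map_sum, hzG _ g hg, smul_zero, Finset.sum_const_zero]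
  · rw [hblock]
    refine le_trans ?_ (hz e he _)
    rw [eq_sum_vecMul_mul_of_isHadamard hA b j]
    refine (Finset.abs_sum_le_sum_abs _ _).trans_eq (Finset.sum_congr rfl fun i _ => ?_)
    rw [abs_mul _ (A j i), habs, mul_one]
  · simp only [abs_mul, habs, abs_of_pos (inv_pos.2 hN), mul_one, Finset.sum_const,
      Finset.card_univ, Fintype.card_fin, nsmul_eq_mul, mul_inv_cancel₀ hN.ne']
  · have hcol : Matrix.vecMul (fun j => (N : ℝ)⁻¹ * A j 0) A = Pi.single 0 1 := by
      change Matrix.vecMul ((N : ℝ)⁻¹ • fun j => A j 0) A = _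
      rw [Matrix.smul_vecMul, vecMul_col_of_isHadamard hA, ← Pi.single_smul, smul_eq_mul,
        inv_mul_cancel₀ hN.ne']
    rw [hblock]
    simpa [hcol, Pi.single_apply, norm_smul] using
      mul_le_of_le_one_right (inv_pos.2 hN).le (hz1 0)

theorem absSum_ofFn {N : ℕ} (b : Fin N → ℝ) : absSum (List.ofFn b) = ∑ i, |b i| := by
  simp [absSum, List.sum_ofFn]

theorem HasSmallBlock.mono {δ' : ℝ} (h : HasSmallBlock E G K δ) (hδ : δ ≤ δ') :
    HasSmallBlock E G K δ' :=
  let ⟨N, y, c, hy1, hyG, hy, hc, hcy⟩ := h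
  ⟨N, y, c, hy1, hyG, hy, hc, hcy.trans hδ⟩

theorem hasSmallBlock_of_typeNorm {V : Ultrafilter Z} [FiniteDimensional ℝ E]
    (hV : IsBoundedNull V) (hV1 : ∀ᶠ w in (V : Filter Z), ‖w‖ ≤ 1) {r : ℝ} (hK : 0 < K)
    (hr : K⁻¹ < r) (hVr : ∀ z, r ≤ typeNorm V z) {q : List ℝ} (hq1 : absSum q = 1)
    (hq : typeNorm (blockLaw V q) 0 < δ) : HasSmallBlock E G K δ := by
  have hr0 : 0 < r := (inv_pos.2 hK).trans hr
  have hpow {N : ℕ} (b : Fin N → ℝ) (j : Fin N) (e : Z) :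
      |b j| * r ≤ typeNorm (blockLaw V (List.ofFn b)) e :=
    abs_mul_le_typeNorm_blockLaw hV hVr (List.mem_ofFn.2 ⟨j, rfl⟩) e
  have hmin := eventually_ultraPow_mul_le_norm hV E (N := q.length) (fun b hb e _ => by
    obtain ⟨j, hj⟩ := Function.ne_iff.1 hb
    exact (mul_pos (abs_pos.2 hj) hr0).trans_le (hpow b j e)) ((div_lt_one hr0).2 hr)
  have hsmall := (tendsto_norm_add_sum_ultraPow hV q.get 0).eventually_lt_const
    (List.ofFn_get q ▸ hq)
  have hG := eventually_ultraPow_forall ((eventually_all_finset G).2 fun g _ => hV.2 g) q.length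
  obtain ⟨y, hy, hyδ, hyG, hy1⟩ :=
    (hmin.and (hsmall.and (hG.and (eventually_ultraPow_forall hV1 _)))).exists
  refine ⟨_, y, q.get, hy1, hyG, fun e he b j => ?_, ?_, ?_⟩
  · have h := (mul_le_mul_of_nonneg_left (hpow b j e) (by positivity)).trans (hy e he b)
    rw [← inv_mul_le_iff₀ hK]
    refine le_of_eq_of_le ?_ h
    field_simp
  · rw [← hq1, ← List.ofFn_get q, absSum_ofFn, List.ofFn_get]
  · simpa using hyδ.le

theorem hasSmallBlock_of_mul_absSum_le {V : Ultrafilter Z} [FiniteDimensional ℝ E]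
    (hV : IsBoundedNull V) (hV1 : ∀ᶠ w in (V : Filter Z), ‖w‖ ≤ 1) {r : ℝ} (hK : 0 < K)
    (hr : K⁻¹ < r) (hVr : ∀ b, ∀ e ∈ E, r * absSum b ≤ typeNorm (blockLaw V b) e) (hδ : 0 < δ) :
    HasSmallBlock E G K δ := by
  have hr0 : 0 < r := (inv_pos.2 hK).trans hr
  obtain ⟨k, hk⟩ := pow_unbounded_of_one_lt δ⁻¹ one_lt_two
  obtain ⟨A, hA⟩ := exists_isHadamard_two_pow k
  have hl1 := eventually_ultraPow_mul_le_norm hV E (N := 2 ^ k) (fun b hb e he => by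
    obtain ⟨j, hj⟩ := Function.ne_iff.1 hb
    refine (mul_pos hr0 ?_).trans_le (hVr _ e he)
    rw [absSum_ofFn]
    exact Finset.sum_pos' (fun i _ => abs_nonneg _) ⟨j, Finset.mem_univ j, abs_pos.2 hj⟩)
    ((div_lt_one hr0).2 hr)
  have hG := eventually_ultraPow_forall ((eventually_all_finset G).2 fun g _ => hV.2 g) (2 ^ k)
  obtain ⟨z, hz, hzG, hz1⟩ := (hl1.and (hG.and (eventually_ultraPow_forall hV1 _))).exists
  refine (hasSmallBlock_of_sum_abs_le hA hz1 hzG fun e he b => ?_).mono ?_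
  · have h := (mul_le_mul_of_nonneg_left (hVr (List.ofFn b) e he) (by positivity)).trans
      (hz e he b)
    rw [absSum_ofFn] at h
    rw [← inv_mul_le_iff₀ hK]
    refine le_of_eq_of_le ?_ h
    field_simp
  · exact_mod_cast inv_le_of_inv_le₀ hδ hk.le

theorem hasSmallBlock (hZ : ¬ FiniteDimensional ℝ Z) (E : Submodule ℝ Z) [FiniteDimensional ℝ E]
    (G : Finset (Z →L[ℝ] ℝ)) (hK : 1 < K) (hδ : 0 < δ) : HasSmallBlock E G K δ := by
  have hK0 : 0 < K := one_pos.trans hK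
  obtain ⟨r, hKr, hr1⟩ := exists_between (inv_lt_one_of_one_lt₀ hK)
  have hr0 : 0 < r := (inv_pos.2 hK0).trans hKr
  obtain ⟨V, hV, hV1, hVr⟩ := exists_isBoundedNull_le_typeNorm hZ hr0 hr1
  by_cases h : ∀ b, ∀ e ∈ E, δ * absSum b ≤ typeNorm (blockLaw V b) e
  · obtain ⟨U, hU, hU1, hUr⟩ :=
      exists_mul_absSum_le_typeNorm_blockLaw hV ⟨0, E.zero_mem⟩ hδ h hr0 hr1
    exact hasSmallBlock_of_mul_absSum_le hU hU1 hK0 hKr hUr hδ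
  · push Not at h
    obtain ⟨c, e, -, hce⟩ := h
    obtain ⟨q, hq1, hq⟩ := exists_typeNorm_blockLaw_zero_lt hV hce
    exact hasSmallBlock_of_typeNorm hV hV1 hK0 hKr hVr hq1 hq

end SmallBlock

section BlockApproximation

variable {Z : Type*} [NormedAddCommGroup Z] [NormedSpace ℝ Z] {E : Submodule ℝ Z} {K δ : ℝ}

theorem UniformlyMinimalMod.inv_smul_add {N : ℕ} {y w : Fin N → Z}
    (h : UniformlyMinimalMod E K y) (hw : ∀ j, w j ∈ E) {s : ℝ} (hs : 0 < s) :
    UniformlyMinimalMod E (s * K) fun j => s⁻¹ • (y j + w j) := by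
  intro e he b j
  have hsum : e + ∑ i, b i • s⁻¹ • (y i + w i) =
      (e + ∑ i, (b i * s⁻¹) • w i) + ∑ i, (b i * s⁻¹) • y i := by
    simp only [smul_smul, smul_add, Finset.sum_add_distrib]
    abel
  have hmem : e + ∑ i, (b i * s⁻¹) • w i ∈ E :=
    E.add_mem he (E.sum_mem fun i _ => E.smul_mem _ (hw i))
  have hj := h _ hmem (fun i => b i * s⁻¹) j
  rw [abs_mul, abs_of_pos (inv_pos.2 hs), ← div_eq_mul_inv, div_le_iff₀ hs] at hj
  rw [hsum]
  exact hj.trans_eq (by ring)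

theorem sum_smul_add_sign_smul {N : ℕ} (y : Fin N → Z) {c : Fin N → ℝ} (hc : ∑ j, |c j| = 1)
    (w : Z) : ∑ j, c j • (y j + (SignType.sign (c j) : ℝ) • w) = ∑ j, c j • y j + w := by
  simp only [smul_add, smul_smul, self_mul_sign, Finset.sum_add_distrib, ← Finset.sum_smul, hc,
    one_smul]

-- Adding small multiples `± a • w` of `w` to a small block with combination `c` changes
-- `∑ j, c j • y j` by `a • w`, so that the new block nearly spans `w`.
theorem exists_uniformlyMinimalMod_approx (hZ : ¬ FiniteDimensional ℝ Z) [FiniteDimensional ℝ E]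
    (G : Finset (Z →L[ℝ] ℝ)) (hK : 1 < K) (hδ : 0 < δ) {w : Z} (hw : w ∈ E)
    (hwG : ∀ g ∈ G, g w = 0) :
    ∃ (N : ℕ) (y : Fin N → Z), (∀ j, ‖y j‖ ≤ 1) ∧ (∀ j, ∀ g ∈ G, g (y j) = 0) ∧
      UniformlyMinimalMod E K y ∧ ∃ s ∈ Submodule.span ℝ (Set.range y), ‖w - s‖ ≤ δ := by
  obtain ⟨s, hs1, hsK⟩ := exists_between hK
  have hs0 : 0 < s := one_pos.trans hs1
  set a := (s - 1) / (‖w‖ + 1) with ha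
  have ha0 : 0 < a := div_pos (sub_pos.2 hs1) (by positivity)
  have haw : a * ‖w‖ ≤ s - 1 := by
    rw [ha, div_mul_eq_mul_div, div_le_iff₀ (by positivity)]
    exact mul_le_mul_of_nonneg_left (lt_add_one _).le (sub_pos.2 hs1).le
  obtain ⟨N, y, c, hy1, hyG, hy, hc, hcy⟩ :=
    hasSmallBlock hZ E G ((one_lt_div hs0).2 hsK) (mul_pos ha0 hδ)
  let v (j : Fin N) : Z := (SignType.sign (c j) : ℝ) • a • w
  refine ⟨N, fun j => s⁻¹ • (y j + v j), fun j => ?_, fun j g hg => ?_, ?_,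
    ∑ j, (a⁻¹ * s * c j) • s⁻¹ • (y j + v j), ?_, ?_⟩
  · have hsign : |(SignType.sign (c j) : ℝ)| ≤ 1 := by
      rcases lt_trichotomy (c j) 0 with h | h | h <;> simp [h]
    have hv : ‖v j‖ ≤ s - 1 := by
      rw [norm_smul, norm_smul, Real.norm_of_nonneg ha0.le]
      exact (mul_le_of_le_one_left (by positivity) hsign).trans haw
    rw [norm_smul, norm_inv, Real.norm_of_nonneg hs0.le, inv_mul_le_iff₀ hs0, mul_one]
    linarith [norm_add_le (y j) (v j), hy1 j]
  · simp [v, hyG j g hg, hwG g hg]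
  · simpa [mul_div_cancel₀ _ hs0.ne'] using
      hy.inv_smul_add (fun j => E.smul_mem _ (E.smul_mem a hw)) hs0
  · exact Submodule.sum_mem _ fun j _ => Submodule.smul_mem _ _ (Submodule.subset_span ⟨j, rfl⟩)
  · have hsum : ∑ j, (a⁻¹ * s * c j) • s⁻¹ • (y j + v j) = a⁻¹ • ∑ j, c j • y j + w := by
      calc ∑ j, (a⁻¹ * s * c j) • s⁻¹ • (y j + v j) = a⁻¹ • ∑ j, c j • (y j + v j) := by
            rw [Finset.smul_sum]
            refine Finset.sum_congr rfl fun j _ => ?_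
            rw [smul_smul, smul_smul]
            congr 1
            field_simp
        _ = a⁻¹ • ∑ j, c j • y j + w := by
            rw [sum_smul_add_sign_smul y hc, smul_add, inv_smul_smul₀ ha0.ne']
    rw [hsum, sub_add_cancel_right, norm_neg, norm_smul, norm_inv, Real.norm_of_nonneg ha0.le,
      inv_mul_le_iff₀ ha0]
    exact hcy

end BlockApproximation

section NormingPairing

variable {X Y : Type*} [NormedAddCommGroup X] [NormedSpace ℝ X] [NormedAddCommGroup Y]
  [NormedSpace ℝ Y] {B : X →L[ℝ] Y →L[ℝ] ℝ}

/-- Each of the two spaces paired by `B` embeds isometrically into the dual of the other, as a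
normed space and its dual do. This symmetric setting treats vectors and functionals at once. -/
structure IsNormingPairing (B : X →L[ℝ] Y →L[ℝ] ℝ) : Prop where
  norm_apply (x : X) : ‖B x‖ = ‖x‖
  norm_flip_apply (y : Y) : ‖B.flip y‖ = ‖y‖

theorem IsNormingPairing.flip (hB : IsNormingPairing B) : IsNormingPairing B.flip :=
  ⟨hB.norm_flip_apply, hB.norm_apply⟩

theorem isNormingPairing_inclusionInDoubleDual :
    IsNormingPairing (NormedSpace.inclusionInDoubleDual ℝ X) :=
  ⟨(NormedSpace.inclusionInDoubleDualLi ℝ).norm_map, fun _ => rfl⟩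

theorem IsNormingPairing.injective (hB : IsNormingPairing B) : Function.Injective B :=
  (AddMonoidHomClass.isometry_of_norm B hB.norm_apply).injective

theorem IsNormingPairing.not_finiteDimensional_right (hB : IsNormingPairing B)
    (hX : ¬ FiniteDimensional ℝ X) : ¬ FiniteDimensional ℝ Y := fun _ =>
  have : FiniteDimensional ℝ (Y →L[ℝ] ℝ) := inferInstance
  hX (Module.Finite.of_injective (B : X →ₗ[ℝ] Y →L[ℝ] ℝ) hB.injective)

theorem exists_mem_eq_apply_of_forall_apply_eq_zero (B : X →L[ℝ] Y →L[ℝ] ℝ) (M : Submodule ℝ X)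
    [FiniteDimensional ℝ M] {f : Y →L[ℝ] ℝ} (hf : ∀ y, (∀ m ∈ M, B m y = 0) → f y = 0) :
    ∃ m ∈ M, B m = f := by
  obtain ⟨n, s, rfl⟩ := Submodule.fg_iff_exists_fin_generating_family.1
    (Module.Finite.iff_fg.1 (inferInstance : FiniteDimensional ℝ M))
  have hspan := mem_span_of_iInf_ker_le_ker (L := fun i => (B (s i) : Y →ₗ[ℝ] ℝ))
    (K := (f : Y →ₗ[ℝ] ℝ)) fun y hy => hf y fun m hm => by
      obtain ⟨a, rfl⟩ := (Submodule.mem_span_range_iff_exists_fun ℝ).1 hm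
      have hy' : ∀ i, B (s i) y = 0 := by simpa using hy
      simp [hy']
  obtain ⟨a, ha⟩ := (Submodule.mem_span_range_iff_exists_fun ℝ).1 hspan
  refine ⟨∑ i, a i • s i, (Submodule.mem_span_range_iff_exists_fun ℝ).2 ⟨a, rfl⟩, ?_⟩
  ext y
  simpa using LinearMap.congr_fun ha y

theorem exists_apply_eq_one_of_le_norm_add (hB : ∀ x, ‖B x‖ = ‖x‖) (M : Submodule ℝ X)
    [FiniteDimensional ℝ M] {x : X} {c c' : ℝ} (hc' : 0 < c') (hc : c' < c)
    (hx : ∀ m ∈ M, c ≤ ‖m + x‖) :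
    ∃ y, (∀ m ∈ M, B m y = 0) ∧ B x y = 1 ∧ ‖y‖ ≤ c'⁻¹ := by
  let A : Submodule ℝ Y := ⨅ m : M, LinearMap.ker (B m : Y →ₗ[ℝ] ℝ)
  have hA (y : Y) : y ∈ A ↔ ∀ m ∈ M, B m y = 0 := by simp [A]
  obtain ⟨y, hy, hlt⟩ : ∃ y ∈ A, c' * ‖y‖ < |B x y| := by
    by_contra! hle
    obtain ⟨g, hg, hgnorm⟩ := exists_extension_norm_eq A ((B x).comp A.subtypeL)
    obtain ⟨m, hm, hmg⟩ := exists_mem_eq_apply_of_forall_apply_eq_zero B M (f := g - B x)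
      fun y hy => sub_eq_zero.2 (hg ⟨y, (hA y).2 hy⟩)
    have hnorm : ‖m + x‖ ≤ c' := by
      rw [← hB, map_add, hmg, sub_add_cancel, hgnorm]
      exact ContinuousLinearMap.opNorm_le_bound _ hc'.le fun y => hle y y.2
    exact (hx m hm).not_gt (hnorm.trans_lt hc)
  have hpos : 0 < |B x y| := (by positivity : 0 ≤ c' * ‖y‖).trans_lt hlt
  refine ⟨(B x y)⁻¹ • y, (hA _).1 (A.smul_mem _ hy), ?_, ?_⟩
  · rw [map_smul, smul_eq_mul, inv_mul_cancel₀ (abs_pos.1 hpos)]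
  · rw [norm_smul, norm_inv, Real.norm_eq_abs, inv_mul_le_iff₀ hpos, ← div_eq_mul_inv,
      le_div_iff₀ hc', mul_comm]
    exact hlt.le

theorem UniformlyMinimalMod.inv_le_norm_add {E : Submodule ℝ X} {K : ℝ} (hK : 0 < K) {N : ℕ}
    {y : Fin N → X} (h : UniformlyMinimalMod E K y) (j : Fin N) :
    ∀ m ∈ E ⊔ Submodule.span ℝ (y '' {j}ᶜ), K⁻¹ ≤ ‖m + y j‖ := by
  classical
  intro m hm
  obtain ⟨e, he, s, hs, rfl⟩ := Submodule.mem_sup.1 hm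
  obtain ⟨a, ha, rfl⟩ := (Finsupp.mem_span_image_iff_linearCombination ℝ).1 hs
  have haj : a j = 0 := by
    by_contra h0
    exact ha (Finsupp.mem_support_iff.2 h0) rfl
  have hj := h e he (fun i => a i + if i = j then 1 else 0) j
  rw [inv_le_iff_one_le_mul₀' hK]
  simpa [haj, add_smul, Finset.sum_add_distrib, ite_smul, ← add_assoc,
    Finsupp.linearCombination_apply, Finsupp.sum_fintype] using hj

theorem UniformlyMinimalMod.exists_biorthogonal (hB : ∀ x, ‖B x‖ = ‖x‖) {E : Submodule ℝ X}
    [FiniteDimensional ℝ E] {K K' : ℝ} (hK : 0 < K) (hKK' : K < K') {N : ℕ} {y : Fin N → X}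
    (h : UniformlyMinimalMod E K y) :
    ∃ f : Fin N → Y, ∀ j, (∀ e ∈ E, B e (f j) = 0) ∧ (∀ i, i ≠ j → B (y i) (f j) = 0) ∧
      B (y j) (f j) = 1 ∧ ‖f j‖ ≤ K' := by
  choose f hf0 hf1 hf using fun j => by
    have : FiniteDimensional ℝ (Submodule.span ℝ (y '' {j}ᶜ)) :=
      FiniteDimensional.span_of_finite ℝ (Set.toFinite _)
    exact exists_apply_eq_one_of_le_norm_add hB _ (inv_pos.2 (hK.trans hKK'))
      (inv_strictAnti₀ hK hKK') (h.inv_le_norm_add hK j)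
  exact ⟨f, fun j => ⟨fun e he => hf0 j e (Submodule.mem_sup_left he), fun i hij =>
    hf0 j _ (Submodule.mem_sup_right (Submodule.subset_span ⟨i, hij, rfl⟩)), hf1 j,
    (hf j).trans_eq (inv_inv K')⟩⟩

end NormingPairing

section Construction

variable {X Y : Type*} [NormedAddCommGroup X] [NormedSpace ℝ X] [NormedAddCommGroup Y]
  [NormedSpace ℝ Y] {B : X →L[ℝ] Y →L[ℝ] ℝ} {K : ℝ} {v₀ : X} {φ₀ : Y} {S : Set (X × Y)}

/-- A biorthogonal system for the pairing `B`, bounded by `K`, each member of which is orthogonal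
to `v₀` or to `φ₀`. -/
structure IsAdmissible (B : X →L[ℝ] Y →L[ℝ] ℝ) (K : ℝ) (v₀ : X) (φ₀ : Y) (S : Set (X × Y)) :
    Prop where
  pairwise : S.Pairwise fun p q => B p.1 q.2 = 0
  apply_eq_one : ∀ p ∈ S, B p.1 p.2 = 1
  norm_mul_norm_le : ∀ p ∈ S, ‖p.1‖ * ‖p.2‖ ≤ K
  apply_eq_zero : ∀ p ∈ S, B p.1 φ₀ = 0 ∨ B v₀ p.2 = 0

namespace IsAdmissible

theorem empty : IsAdmissible B K v₀ φ₀ ∅ := by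
  constructor <;> simp

theorem swap (hS : IsAdmissible B K v₀ φ₀ S) :
    IsAdmissible B.flip K φ₀ v₀ (Prod.swap ⁻¹' S) where
  pairwise _ hp _ hq hpq := hS.pairwise hq hp (Prod.swap_injective.ne hpq.symm)
  apply_eq_one _ hp := hS.apply_eq_one _ hp
  norm_mul_norm_le _ hp := (mul_comm _ _).trans_le (hS.norm_mul_norm_le _ hp)
  apply_eq_zero _ hp := (hS.apply_eq_zero _ hp).symm

theorem union {T : Set (X × Y)} (hS : IsAdmissible B K v₀ φ₀ S) (hT : IsAdmissible B K v₀ φ₀ T)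
    (hST : ∀ p ∈ S, ∀ q ∈ T, B p.1 q.2 = 0 ∧ B q.1 p.2 = 0) :
    IsAdmissible B K v₀ φ₀ (S ∪ T) where
  pairwise := Set.pairwise_union.2 ⟨hS.pairwise, hT.pairwise, fun p hp q hq _ => hST p hp q hq⟩
  apply_eq_one _ := Or.rec (hS.apply_eq_one _) (hT.apply_eq_one _)
  norm_mul_norm_le _ := Or.rec (hS.norm_mul_norm_le _) (hT.norm_mul_norm_le _)
  apply_eq_zero _ := Or.rec (hS.apply_eq_zero _) (hT.apply_eq_zero _)

theorem iUnion {ι : Type*} {S : ι → Set (X × Y)} (hdir : Directed (· ⊆ ·) S)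
    (hS : ∀ i, IsAdmissible B K v₀ φ₀ (S i)) : IsAdmissible B K v₀ φ₀ (⋃ i, S i) where
  pairwise := (Set.pairwise_iUnion hdir).2 fun i => (hS i).pairwise
  apply_eq_one _ hp := let ⟨i, hi⟩ := Set.mem_iUnion.1 hp; (hS i).apply_eq_one _ hi
  norm_mul_norm_le _ hp := let ⟨i, hi⟩ := Set.mem_iUnion.1 hp; (hS i).norm_mul_norm_le _ hi
  apply_eq_zero _ hp := let ⟨i, hi⟩ := Set.mem_iUnion.1 hp; (hS i).apply_eq_zero _ hi

theorem exists_projection (hS : IsAdmissible B K v₀ φ₀ S) (hfin : S.Finite) (u : X) :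
    ∃ s ∈ Submodule.span ℝ (Prod.fst '' S), ∀ p ∈ S, B (u - s) p.2 = 0 := by
  refine ⟨∑ p ∈ hfin.toFinset, B u p.2 • p.1, Submodule.sum_mem _ fun p hp =>
    Submodule.smul_mem _ _ (Submodule.subset_span ⟨p, hfin.mem_toFinset.1 hp, rfl⟩),
    fun q hq => ?_⟩
  have hsum : ∑ p ∈ hfin.toFinset, B u p.2 * B p.1 q.2 = B u q.2 := by
    rw [Finset.sum_eq_single_of_mem q (hfin.mem_toFinset.2 hq) fun p hp hpq => by
      rw [hS.pairwise (hfin.mem_toFinset.1 hp) hq hpq, mul_zero], hS.apply_eq_one q hq, mul_one]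
  simp [hsum]

theorem exists_superset_norm_sub_le (hB : IsNormingPairing B) (hX : ¬ FiniteDimensional ℝ X)
    (hK : 1 < K) (hS : IsAdmissible B K v₀ φ₀ S) (hfin : S.Finite) (u : X) {δ : ℝ} (hδ : 0 < δ) :
    ∃ T ⊇ S, T.Finite ∧ IsAdmissible B K v₀ φ₀ T ∧
      ∃ s ∈ Submodule.span ℝ (Prod.fst '' T), ‖u - s‖ ≤ δ := by
  classical
  obtain ⟨s, hs, hs0⟩ := hS.exists_projection hfin u
  have : FiniteDimensional ℝ (Submodule.span ℝ (Prod.fst '' S)) :=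
    FiniteDimensional.span_of_finite ℝ (hfin.image _)
  have : FiniteDimensional ℝ (Submodule.span ℝ {v₀, u - s}) :=
    FiniteDimensional.span_of_finite ℝ (Set.toFinite _)
  have hmem {v : X} (hv : v ∈ ({v₀, u - s} : Set X)) :
      v ∈ Submodule.span ℝ (Prod.fst '' S) ⊔ Submodule.span ℝ {v₀, u - s} :=
    Submodule.mem_sup_right (Submodule.subset_span hv)
  obtain ⟨K', hK'1, hK'⟩ := exists_between hK
  obtain ⟨N, y, hy1, hyS, hy, s', hs', hus⟩ := exists_uniformlyMinimalMod_approx hX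
    (hfin.toFinset.image fun p => B.flip p.2) hK'1 hδ (hmem (Set.mem_insert_of_mem _ rfl))
    (Finset.forall_mem_image.2 fun p hp => hs0 p (hfin.mem_toFinset.1 hp))
  obtain ⟨f, hf⟩ := hy.exists_biorthogonal hB.norm_apply (one_pos.trans hK'1) hK'
  let T : Set (X × Y) := Set.range fun j => (y j, f j)
  have hT : IsAdmissible B K v₀ φ₀ T := by
    constructor
    · rintro _ ⟨i, rfl⟩ _ ⟨j, rfl⟩ hij
      exact (hf j).2.1 i fun h => hij (h ▸ rfl)
    all_goals rintro _ ⟨j, rfl⟩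
    · exact (hf j).2.2.1
    · exact (mul_le_of_le_one_left (norm_nonneg _) (hy1 j)).trans (hf j).2.2.2
    · exact Or.inr ((hf j).1 _ (hmem (Set.mem_insert _ _)))
  refine ⟨S ∪ T, Set.subset_union_left, hfin.union (Set.finite_range _), hS.union hT ?_,
    s + s', add_mem (Submodule.span_mono (Set.image_mono Set.subset_union_left) hs)
    (Submodule.span_mono ?_ hs'), by rwa [← sub_sub]⟩
  · rintro p hp _ ⟨j, rfl⟩
    refine ⟨(hf j).1 _ (Submodule.mem_sup_left (Submodule.subset_span ⟨p, hp, rfl⟩)), ?_⟩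
    exact hyS j _ (Finset.mem_image.2 ⟨p, hfin.mem_toFinset.2 hp, rfl⟩)
  · rintro _ ⟨j, rfl⟩
    exact ⟨_, Or.inr ⟨j, rfl⟩, rfl⟩

theorem exists_superset_norm_sub_le_both (hB : IsNormingPairing B)
    (hX : ¬ FiniteDimensional ℝ X) (hK : 1 < K) (hS : IsAdmissible B K v₀ φ₀ S)
    (hfin : S.Finite) (u : X) (g : Y) {δ : ℝ} (hδ : 0 < δ) :
    ∃ T ⊇ S, T.Finite ∧ IsAdmissible B K v₀ φ₀ T ∧
      (∃ s ∈ Submodule.span ℝ (Prod.fst '' T), ‖u - s‖ ≤ δ) ∧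
      ∃ s ∈ Submodule.span ℝ (Prod.snd '' T), ‖g - s‖ ≤ δ := by
  obtain ⟨T₁, hST₁, hfin₁, hT₁, s, hs, hus⟩ := hS.exists_superset_norm_sub_le hB hX hK hfin u hδ
  obtain ⟨T₂, hT₁₂, hfin₂, hT₂, t, ht, hgt⟩ := hT₁.swap.exists_superset_norm_sub_le hB.flip
    (hB.not_finiteDimensional_right hX) hK (hfin₁.preimage Prod.swap_injective.injOn) g hδ
  have hT₁₂' : T₁ ⊆ Prod.swap ⁻¹' T₂ := fun p hp => hT₁₂ (a := p.swap) hp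
  refine ⟨Prod.swap ⁻¹' T₂, hST₁.trans hT₁₂', hfin₂.preimage Prod.swap_injective.injOn,
    hT₂.swap, ⟨s, Submodule.span_mono (Set.image_mono hT₁₂') hs, hus⟩, t,
    Submodule.span_mono ?_ ht, hgt⟩
  rintro _ ⟨p, hp, rfl⟩
  exact ⟨p.swap, hp, rfl⟩

end IsAdmissible

theorem exists_unpair_eq_and_one_div_lt (k : ℕ) {δ : ℝ} (hδ : 0 < δ) :
    ∃ n : ℕ, n.unpair.1 = k ∧ 1 / ((n : ℝ) + 1) < δ := by
  obtain ⟨m, hm⟩ := exists_nat_one_div_lt hδ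
  exact ⟨Nat.pair k m, by simp, (Nat.one_div_le_one_div (Nat.right_le_pair k m)).trans_lt hm⟩

theorem mem_topologicalClosure_of_forall_exists_norm_sub_le {E : Type*} [NormedAddCommGroup E]
    [NormedSpace ℝ E] {u : ℕ → E} {M : Submodule ℝ E}
    (h : ∀ n : ℕ, ∃ s ∈ M, ‖u n.unpair.1 - s‖ ≤ 1 / ((n : ℝ) + 1)) (k : ℕ) :
    u k ∈ M.topologicalClosure := by
  refine Metric.mem_closure_iff.2 fun δ hδ => ?_
  obtain ⟨n, rfl, hn⟩ := exists_unpair_eq_and_one_div_lt k hδ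
  obtain ⟨s, hs, hus⟩ := h n
  exact ⟨s, hs, (dist_eq_norm _ _).trans_lt (hus.trans_lt hn)⟩

theorem exists_isAdmissible_mem_topologicalClosure (hB : IsNormingPairing B)
    (hX : ¬ FiniteDimensional ℝ X) (hK : 1 < K) (v₀ : X) (φ₀ : Y) (u : ℕ → X) (g : ℕ → Y) :
    ∃ S : Set (X × Y), S.Countable ∧ IsAdmissible B K v₀ φ₀ S ∧
      (∀ k, u k ∈ (Submodule.span ℝ (Prod.fst '' S)).topologicalClosure) ∧
      ∀ k, g k ∈ (Submodule.span ℝ (Prod.snd '' S)).topologicalClosure := by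
  choose step hsub hfin hadm hu hg using
    fun (n : ℕ) (S : {S : Set (X × Y) // S.Finite ∧ IsAdmissible B K v₀ φ₀ S}) =>
      S.2.2.exists_superset_norm_sub_le_both hB hX hK S.2.1 (u n.unpair.1) (g n.unpair.1)
        (Nat.one_div_pos_of_nat (n := n))
  let S (n : ℕ) : {S : Set (X × Y) // S.Finite ∧ IsAdmissible B K v₀ φ₀ S} :=
    Nat.rec ⟨∅, Set.finite_empty, .empty⟩ (fun n S => ⟨step n S, hfin n S, hadm n S⟩) n
  have hmono : Monotone fun n => (S n).1 := monotone_nat_of_le_succ fun n => hsub n (S n)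
  have hle (n : ℕ) : step n (S n) ⊆ ⋃ n, (S n).1 := Set.subset_iUnion (fun n => (S n).1) (n + 1)
  refine ⟨⋃ n, (S n).1, Set.countable_iUnion fun n => (S n).2.1.countable,
    .iUnion hmono.directed_le fun n => (S n).2.2,
    mem_topologicalClosure_of_forall_exists_norm_sub_le fun n => ?_,
    mem_topologicalClosure_of_forall_exists_norm_sub_le fun n => ?_⟩
  · obtain ⟨s, hs, hus⟩ := hu n (S n)
    exact ⟨s, Submodule.span_mono (Set.image_mono (hle n)) hs, hus⟩
  · obtain ⟨s, hs, hus⟩ := hg n (S n)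
    exact ⟨s, Submodule.span_mono (Set.image_mono (hle n)) hs, hus⟩

end Construction

section MarkushevichBasis

variable {X : Type*} [NormedAddCommGroup X] [NormedSpace ℝ X] {x : ℕ → X} {xs : ℕ → X →L[ℝ] ℝ}

/-- The sequences `x` and `xs` form a biorthogonal system. -/
structure IsBiorthogonal (x : ℕ → X) (xs : ℕ → X →L[ℝ] ℝ) : Prop where
  apply_eq_ite (m n : ℕ) : xs m (x n) = if m = n then 1 else 0

/-- The sequences `x` and `xs` form an M-basis (Markushevich basis): a biorthogonal system that is
fundamental and total. -/
structure IsMarkushevichBasis (x : ℕ → X) (xs : ℕ → X →L[ℝ] ℝ) : Prop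
    extends IsBiorthogonal x xs where
  topologicalClosure_span : (Submodule.span ℝ (Set.range x)).topologicalClosure = ⊤
  eq_zero_of_forall_apply_eq_zero (v : X) (hv : ∀ n, xs n v = 0) : v = 0

theorem exists_seq_dual_separating (X : Type*) [NormedAddCommGroup X] [NormedSpace ℝ X]
    [TopologicalSpace.SeparableSpace X] :
    ∃ g : ℕ → X →L[ℝ] ℝ, ∀ v, (∀ k, g k v = 0) → v = 0 := by
  choose g hg1 hg using fun k => exists_dual_vector'' ℝ (TopologicalSpace.denseSeq X k)
  refine ⟨g, fun v hv => ?_⟩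
  by_contra hv0
  obtain ⟨k, hk⟩ := (TopologicalSpace.denseRange_denseSeq X).exists_dist_lt v
    (half_pos (norm_pos_iff.2 hv0))
  set w := TopologicalSpace.denseSeq X k
  have hw : ‖w‖ ≤ ‖v - w‖ := calc
    ‖w‖ = ‖g k (v - w)‖ := by rw [map_sub, hv, hg, zero_sub, norm_neg, RCLike.norm_ofReal, abs_norm]
    _ ≤ ‖v - w‖ := by simpa using (g k).le_of_opNorm_le (hg1 k) (v - w)
  rw [dist_eq_norm] at hk
  linarith [norm_sub_norm_le v w]

theorem apply_eq_zero_of_mem_topologicalClosure_span {A : Set (X →L[ℝ] ℝ)} {v : X}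
    (hA : ∀ f ∈ A, f v = 0) {g : X →L[ℝ] ℝ}
    (hg : g ∈ (Submodule.span ℝ A).topologicalClosure) : g v = 0 := by
  let M := (NormedSpace.inclusionInDoubleDual ℝ X v).toLinearMap.ker
  have hM : IsClosed (M : Set (X →L[ℝ] ℝ)) := ContinuousLinearMap.isClosed_ker _
  exact Submodule.topologicalClosure_minimal _ (Submodule.span_le.2 hA : _ ≤ M) hM hg

theorem infinite_of_topologicalClosure_span_image_eq_top {Y : Type*} {S : Set Y} {f : Y → X}
    (hX : ¬ FiniteDimensional ℝ X) (hS : (Submodule.span ℝ (f '' S)).topologicalClosure = ⊤) :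
    S.Infinite := by
  intro hfin
  have : FiniteDimensional ℝ (Submodule.span ℝ (f '' S)) :=
    FiniteDimensional.span_of_finite ℝ (hfin.image f)
  rw [(Submodule.closed_of_finiteDimensional _).submodule_topologicalClosure_eq] at hS
  rw [hS] at this
  exact hX (Module.Finite.equiv Submodule.topEquiv)

theorem IsAdmissible.exists_isMarkushevichBasis {K : ℝ} {v₀ : X} {φ₀ : X →L[ℝ] ℝ}
    {S : Set (X × (X →L[ℝ] ℝ))} (hX : ¬ FiniteDimensional ℝ X)
    (hS : IsAdmissible (NormedSpace.inclusionInDoubleDual ℝ X) K v₀ φ₀ S) (hcount : S.Countable)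
    (hfst : (Submodule.span ℝ (Prod.fst '' S)).topologicalClosure = ⊤)
    (hsnd : ∀ v, (∀ p ∈ S, p.2 v = 0) → v = 0) :
    ∃ (x : ℕ → X) (xs : ℕ → X →L[ℝ] ℝ), IsMarkushevichBasis x xs ∧ (∀ n, ‖x n‖ = 1) ∧
      (∀ n, ‖xs n‖ ≤ K) ∧ ∀ n, φ₀ (x n) = 0 ∨ xs n v₀ = 0 := by
  have := (infinite_of_topologicalClosure_span_image_eq_top hX hfst).to_subtype
  have := hcount.to_subtype
  obtain ⟨e⟩ : Nonempty (ℕ ≃ S) := nonempty_equiv_of_countable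
  have hne (p : S) : ‖p.1.1‖ ≠ 0 := norm_ne_zero_iff.2 fun h => by
    simpa [h] using hS.apply_eq_one p p.2
  refine ⟨fun n => ‖(e n).1.1‖⁻¹ • (e n).1.1, fun n => ‖(e n).1.1‖ • (e n).1.2,
    ⟨⟨fun m n => ?_⟩, ?_, fun v hv => hsnd v fun p hp => ?_⟩, fun n => ?_, fun n => ?_,
    fun n => ?_⟩
  · rcases eq_or_ne m n with rfl | hmn
    · have h : (e m).1.2 (e m).1.1 = 1 := hS.apply_eq_one _ (e m).2
      simp [h, hne]
    · have h : (e m).1.2 (e n).1.1 = 0 := hS.pairwise (e n).2 (e m).2 fun h =>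
        hmn (e.injective (Subtype.ext h)).symm
      simp [h, hmn]
  · refine top_unique (hfst.ge.trans (Submodule.topologicalClosure_mono (Submodule.span_le.2 ?_)))
    rintro _ ⟨p, hp, rfl⟩
    obtain ⟨n, hn⟩ := e.surjective ⟨p, hp⟩
    have hmem := Submodule.smul_mem _ ‖p.1‖ (Submodule.subset_span (R := ℝ)
      (Set.mem_range_self (f := fun n => ‖(e n).1.1‖⁻¹ • (e n).1.1) n))
    rwa [hn, smul_inv_smul₀ (hne ⟨p, hp⟩)] at hmem
  · obtain ⟨n, hn⟩ := e.surjective ⟨p, hp⟩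
    simpa [hn, hne ⟨p, hp⟩] using hv n
  · exact norm_smul_inv_norm (norm_ne_zero_iff.1 (hne _))
  · simpa [norm_smul] using hS.norm_mul_norm_le _ (e n).2
  · simpa [hne] using hS.apply_eq_zero _ (e n).2

theorem exists_isMarkushevichBasis_apply_eq_zero_or [TopologicalSpace.SeparableSpace X]
    (hX : ¬ FiniteDimensional ℝ X) {K : ℝ} (hK : 1 < K) (v₀ : X) (φ₀ : X →L[ℝ] ℝ) :
    ∃ (x : ℕ → X) (xs : ℕ → X →L[ℝ] ℝ), IsMarkushevichBasis x xs ∧ (∀ n, ‖x n‖ = 1) ∧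
      (∀ n, ‖xs n‖ ≤ K) ∧ ∀ n, φ₀ (x n) = 0 ∨ xs n v₀ = 0 := by
  obtain ⟨g, hg⟩ := exists_seq_dual_separating X
  obtain ⟨S, hcount, hS, hfst, hsnd⟩ := exists_isAdmissible_mem_topologicalClosure
    isNormingPairing_inclusionInDoubleDual hX hK v₀ φ₀ (TopologicalSpace.denseSeq X) g
  refine hS.exists_isMarkushevichBasis hX hcount (top_unique fun v _ => ?_) fun v hv =>
    hg v fun k => apply_eq_zero_of_mem_topologicalClosure_span ?_ (hsnd k)
  · exact closure_minimal (Set.range_subset_iff.2 hfst)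
      (Submodule.isClosed_topologicalClosure _) (TopologicalSpace.denseRange_denseSeq X v)
  · rintro _ ⟨p, hp, rfl⟩
    exact hv p hp

end MarkushevichBasis

section PartialSums

variable {X : Type*} [NormedAddCommGroup X] [NormedSpace ℝ X] {x : ℕ → X} {xs : ℕ → X →L[ℝ] ℝ}

/-- The `n`-th partial sum operator of a biorthogonal system. -/
noncomputable def partialSum (x : ℕ → X) (xs : ℕ → X →L[ℝ] ℝ) (n : ℕ) : X →L[ℝ] X :=
  ∑ i ∈ Finset.range n, (xs i).smulRight (x i)

theorem partialSum_apply (x : ℕ → X) (xs : ℕ → X →L[ℝ] ℝ) (n : ℕ) (v : X) :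
    partialSum x xs n v = ∑ i ∈ Finset.range n, xs i v • x i := by
  simp [partialSum]

namespace IsBiorthogonal

theorem comp_perm (h : IsBiorthogonal x xs) (σ : Equiv.Perm ℕ) :
    IsBiorthogonal (x ∘ σ) (xs ∘ σ) :=
  ⟨fun m n => by simp [h.apply_eq_ite]⟩

theorem eventually_partialSum_eq (h : IsBiorthogonal x xs) {v : X}
    (hv : v ∈ Submodule.span ℝ (Set.range x)) : ∀ᶠ n in atTop, partialSum x xs n v = v := by
  induction hv using Submodule.span_induction with
  | mem v hv =>
    obtain ⟨k, rfl⟩ := hv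
    filter_upwards [eventually_gt_atTop k] with n hn
    simp [partialSum_apply, h.apply_eq_ite, hn]
  | zero => simp
  | add v w _ _ hv hw =>
    filter_upwards [hv, hw] with n hv hw
    rw [map_add, hv, hw]
  | smul a v _ hv =>
    filter_upwards [hv] with n hv
    rw [map_smul, hv]

theorem norm_partialSum_le (h : IsBiorthogonal x xs)
    (hx : (Submodule.span ℝ (Set.range x)).topologicalClosure = ⊤) {C : ℝ}
    (hC : ∀ m n : ℕ, m ≤ n → ∀ a : ℕ → ℝ,
      ‖∑ i ∈ Finset.range m, a i • x i‖ ≤ C * ‖∑ i ∈ Finset.range n, a i • x i‖)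
    (m : ℕ) (v : X) : ‖partialSum x xs m v‖ ≤ C * ‖v‖ := by
  have hclosed : IsClosed {v : X | ‖partialSum x xs m v‖ ≤ C * ‖v‖} :=
    isClosed_le (by fun_prop) (by fun_prop)
  refine closure_minimal (fun v hv => ?_) hclosed
    ((Submodule.dense_iff_topologicalClosure_eq_top.2 hx) v)
  obtain ⟨n, hn, hmn⟩ := ((h.eventually_partialSum_eq hv).and (eventually_ge_atTop m)).exists
  have hle := hC m n hmn fun i => xs i v
  rwa [← partialSum_apply, ← partialSum_apply, hn] at hle

-- Each partial sum operator sends `v₀` into the kernel of `φ₀`, so for `v` in the span of the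
-- system, `φ₀ v = φ₀ (partialSum x xs n (v - v₀))` for large `n`; now let `v` tend to `v₀`.
theorem apply_eq_zero_of_partial_sum_bound (h : IsBiorthogonal x xs)
    (hx : (Submodule.span ℝ (Set.range x)).topologicalClosure = ⊤) {C : ℝ}
    (hC : ∀ m n : ℕ, m ≤ n → ∀ a : ℕ → ℝ,
      ‖∑ i ∈ Finset.range m, a i • x i‖ ≤ C * ‖∑ i ∈ Finset.range n, a i • x i‖)
    {v₀ : X} {φ₀ : X →L[ℝ] ℝ} (hor : ∀ n, φ₀ (x n) = 0 ∨ xs n v₀ = 0) : φ₀ v₀ = 0 := by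
  have hzero (n : ℕ) : φ₀ (partialSum x xs n v₀) = 0 := by
    rw [partialSum_apply, map_sum]
    refine Finset.sum_eq_zero fun i _ => ?_
    rcases hor i with hi | hi <;> simp [hi]
  have hclosed : IsClosed {v : X | |φ₀ v| ≤ ‖φ₀‖ * (C * ‖v - v₀‖)} :=
    isClosed_le (by fun_prop) (by fun_prop)
  have hv₀ : |φ₀ v₀| ≤ ‖φ₀‖ * (C * ‖v₀ - v₀‖) := by
    refine closure_minimal (fun v hv => ?_) hclosed
      ((Submodule.dense_iff_topologicalClosure_eq_top.2 hx) v₀)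
    obtain ⟨n, hn⟩ := (h.eventually_partialSum_eq hv).exists
    calc |φ₀ v| = ‖φ₀ (partialSum x xs n (v - v₀))‖ := by
          rw [map_sub, hn, map_sub, hzero, sub_zero, Real.norm_eq_abs]
      _ ≤ ‖φ₀‖ * ‖partialSum x xs n (v - v₀)‖ := φ₀.le_opNorm _
      _ ≤ ‖φ₀‖ * (C * ‖v - v₀‖) := by gcongr; exact h.norm_partialSum_le hx hC n _
  simpa using hv₀

end IsBiorthogonal

end PartialSums

section AuerbachNorm

variable {X : Type*} [NormedAddCommGroup X] [NormedSpace ℝ X] {xs : ℕ → X →L[ℝ] ℝ} {K : ℝ}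

/-- The norm `max ‖v‖ (⨆ n, |xs n v|)`, the smallest one above the given norm for which all `xs n`
have norm at most `1`. The supremum is meaningful only if the `xs n` are uniformly bounded. -/
noncomputable def auerbachNorm (xs : ℕ → X →L[ℝ] ℝ) : Seminorm ℝ X :=
  normSeminorm ℝ X ⊔ ⨆ n, (normSeminorm ℝ ℝ).comp (xs n : X →ₗ[ℝ] ℝ)

theorem bddAbove_range_comp_of_norm_le (hxs : ∀ n, ‖xs n‖ ≤ K) :
    BddAbove (Set.range fun n => (normSeminorm ℝ ℝ).comp (xs n : X →ₗ[ℝ] ℝ)) :=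
  Seminorm.bddAbove_range_iff.2 fun v =>
    ⟨K * ‖v‖, Set.forall_mem_range.2 fun n => (xs n).le_of_opNorm_le (hxs n) v⟩

theorem norm_le_auerbachNorm (xs : ℕ → X →L[ℝ] ℝ) (v : X) : ‖v‖ ≤ auerbachNorm xs v :=
  le_sup_left (a := normSeminorm ℝ X) v

theorem abs_apply_le_auerbachNorm (hxs : ∀ n, ‖xs n‖ ≤ K) (n : ℕ) (v : X) :
    |xs n v| ≤ auerbachNorm xs v :=
  ((le_ciSup (bddAbove_range_comp_of_norm_le hxs) n).trans le_sup_right : _ ≤ auerbachNorm xs) v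

theorem auerbachNorm_le (hxs : ∀ n, ‖xs n‖ ≤ K) {v : X} {c : ℝ} (hv : ‖v‖ ≤ c)
    (hxsv : ∀ n, |xs n v| ≤ c) : auerbachNorm xs v ≤ c := by
  rw [auerbachNorm, Seminorm.sup_apply, Seminorm.iSup_apply (bddAbove_range_comp_of_norm_le hxs)]
  exact max_le hv (ciSup_le hxsv)

end AuerbachNorm

theorem exists_renorming_with_Auerbach_basis_no_permutation_Schauder_general
    (X : Type*) [NormedAddCommGroup X] [NormedSpace ℝ X]
    [TopologicalSpace.SeparableSpace X] (hinf : ¬ FiniteDimensional ℝ X)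
    (ε : ℝ) (hε : 0 < ε) :
    ∃ f : X → ℝ,
      (∀ v : X, ‖v‖ ≤ f v ∧ f v ≤ (1 + ε) * ‖v‖) ∧
      (∀ v w : X, f (v + w) ≤ f v + f w) ∧
      (∀ (a : ℝ) (v : X), f (a • v) = |a| * f v) ∧
      ∃ (x : ℕ → X) (xs : ℕ → X →L[ℝ] ℝ),
        (∀ m n, xs m (x n) = if m = n then 1 else 0) ∧
        (Submodule.span ℝ (Set.range x)).topologicalClosure = ⊤ ∧
        (∀ v : X, (∀ n, xs n v = 0) → v = 0) ∧
        (∀ n, f (x n) = 1) ∧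
        (∀ n, ∀ v : X, |xs n v| ≤ f v) ∧
        (∀ σ : Equiv.Perm ℕ, ¬ ∃ C : ℝ,
          ∀ m n : ℕ, m ≤ n → ∀ a : ℕ → ℝ,
            ‖∑ i ∈ Finset.range m, a i • x (σ i)‖ ≤
              C * ‖∑ i ∈ Finset.range n, a i • x (σ i)‖) := by
  have : Nontrivial X := not_subsingleton_iff_nontrivial.1 fun _ => hinf inferInstance
  obtain ⟨v₀, hv₀⟩ := exists_ne (0 : X)
  obtain ⟨φ₀, hφ₀⟩ := SeparatingDual.exists_ne_zero (R := ℝ) hv₀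
  obtain ⟨x, xs, hx, hx1, hxs, hor⟩ :=
    exists_isMarkushevichBasis_apply_eq_zero_or hinf (lt_add_of_pos_right 1 hε) v₀ φ₀
  have hle_one (n m : ℕ) : |xs m (x n)| ≤ 1 := by
    rw [hx.apply_eq_ite]
    split_ifs <;> simp
  have hle (v : X) : auerbachNorm xs v ≤ (1 + ε) * ‖v‖ :=
    auerbachNorm_le hxs (le_mul_of_one_le_left (norm_nonneg v) (by linarith)) fun n =>
      (xs n).le_of_opNorm_le (hxs n) v
  refine ⟨auerbachNorm xs, fun v => ⟨norm_le_auerbachNorm xs v, hle v⟩, map_add_le_add _,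
    map_smul_eq_mul _, x, xs, hx.apply_eq_ite, hx.topologicalClosure_span,
    hx.eq_zero_of_forall_apply_eq_zero, fun n => ?_, abs_apply_le_auerbachNorm hxs, ?_⟩
  · exact (auerbachNorm_le hxs (hx1 n).le (hle_one n)).antisymm
      ((hx1 n).ge.trans (norm_le_auerbachNorm xs _))
  · rintro σ ⟨C, hC⟩
    have hσ := hx.toIsBiorthogonal.comp_perm σ
    have hspan : (Submodule.span ℝ (Set.range (x ∘ σ))).topologicalClosure = ⊤ := by
      rw [σ.surjective.range_comp, hx.topologicalClosure_span]
    exact hφ₀ (hσ.apply_eq_zero_of_partial_sum_bound hspan hC fun n => hor (σ n))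

/-- Every infinite-dimensional separable real Banach space `(X, ‖·‖)`
admits, for every `ε > 0`, an equivalent norm `f = |||·|||` with
`‖v‖ ≤ f v ≤ (1+ε)‖v‖` such that `(X, f)` has an Auerbach basis `(xₙ, xₙ*)`
(`f (xₙ) = 1` and the `f`-dual norm of `xₙ*` is `1`, encoded by `|xₙ* v| ≤ f v` for all
`v` together with `xₙ*(xₙ) = 1 = f (xₙ)`), no permutation of which satisfies a uniform
partial-sum bound; in particular no permutation is equivalent to a Schauder basis. -/
theorem exists_renorming_with_Auerbach_basis_no_permutation_Schauder
    (X : Type*) [NormedAddCommGroup X] [NormedSpace ℝ X] [CompleteSpace X]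
    [TopologicalSpace.SeparableSpace X] (hinf : ¬ FiniteDimensional ℝ X)
    (ε : ℝ) (hε : 0 < ε) :
    ∃ f : X → ℝ,
      (∀ v : X, ‖v‖ ≤ f v ∧ f v ≤ (1 + ε) * ‖v‖) ∧
      (∀ v w : X, f (v + w) ≤ f v + f w) ∧
      (∀ (a : ℝ) (v : X), f (a • v) = |a| * f v) ∧
      ∃ (x : ℕ → X) (xs : ℕ → X →L[ℝ] ℝ),
        (∀ m n, xs m (x n) = if m = n then 1 else 0) ∧
        (Submodule.span ℝ (Set.range x)).topologicalClosure = ⊤ ∧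
        (∀ v : X, (∀ n, xs n v = 0) → v = 0) ∧
        (∀ n, f (x n) = 1) ∧
        (∀ n, ∀ v : X, |xs n v| ≤ f v) ∧
        (∀ σ : Equiv.Perm ℕ, ¬ ∃ C : ℝ,
          ∀ m n : ℕ, m ≤ n → ∀ a : ℕ → ℝ,
            ‖∑ i ∈ Finset.range m, a i • x (σ i)‖ ≤
              C * ‖∑ i ∈ Finset.range n, a i • x (σ i)‖) :=
  exists_renorming_with_Auerbach_basis_no_permutation_Schauder_general X hinf ε hε
end

section
/- The complex Banach space ℓ¹ (of absolutely summable complex sequences) contains an Auerbach basis {x_n, x_n*}_{n∈ℕ} such that for every permutation σ of ℕ there is no constant C < ∞ with ‖Σ_{i≤m} a_i x_{σ(i)}‖ ≤ C‖Σ_{i≤n} a_i x_{σ(i)}‖ for all m ≤ n and all scalars a_1,…,a_n; in particular no permutation of this Auerbach basis is equivalent to a Schauder basis of ℓ¹. -/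
open scoped BigOperators

/-!
Cut the coordinates of `ℓ¹` into finite blocks of unbounded sizes `N` and place in each block the
rows of an `N × N` complex Hadamard matrix, divided by `N`. Since the matrix entries are unimodular
and the rows orthogonal, these vectors and their coefficient functionals, which are the conjugated
rows, have norm one.

Within a block, the rows multiplied by the conjugated entries of a fixed column add up to `N` times
a single unit coordinate vector, so a partial-sum bound with constant `C` controls by `C N` the `ℓ¹`
norms of all the partial sums `S k` of these unimodular multiples of rows, taken in the given order.
They form a uniformly bounded orthogonal system, and Olevskii's theorem says that in every order
some partial sum of such a system has a large `L¹` norm. To see this, integrate the energy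
`∑ ‖S (j + r) - S j‖² / r²` over `1 ≤ r ≤ L` and `j < L`, where `2 L ≤ N`. By orthogonality it
equals `L N ∑ 1 / r`. On the other hand `k ↦ S k` has increments of norm at most one, so at each
point the energy is at most a constant times `∑ ‖S k‖` over `k < 2 L`. Hence `log L` is at most a
constant times `C`.
-/

open Finset MeasureTheory
open scoped ComplexConjugate InnerProductSpace Matrix lp

section Interpolation

lemma min_one_sq_div_sq_le {z t : ℝ} (hz : 0 < z) (ht : 0 ≤ t) :
    min 1 (z ^ 2 / (t + 1) ^ 2) ≤ 4 * z * (z / (t + z) - z / (t + 1 + z)) := by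
  have hdiff : 4 * z * (z / (t + z) - z / (t + 1 + z)) =
      4 * z ^ 2 / ((t + 1 + z) * (t + z)) := by
    field_simp
    ring
  rw [hdiff]
  rcases le_total z (t + 1) with h | h
  · calc min 1 (z ^ 2 / (t + 1) ^ 2)
        ≤ z ^ 2 / (t + 1) ^ 2 := min_le_right _ _
      _ = 4 * z ^ 2 / (4 * (t + 1) ^ 2) := by field_simp
      _ ≤ 4 * z ^ 2 / ((t + 1 + z) * (t + z)) := by
        refine div_le_div_of_nonneg_left (by positivity) (by positivity) ?_
        nlinarith
  · refine (min_le_left _ _).trans ((one_le_div₀ (by positivity)).2 ?_)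
    nlinarith

lemma sum_min_one_sq_div_sq_le {z : ℝ} (hz : 0 ≤ z) (R : ℕ) :
    ∑ r ∈ range R, min 1 (z ^ 2 / ((r : ℝ) + 1) ^ 2) ≤ 4 * z := by
  rcases hz.eq_or_lt with rfl | hz
  · simp
  calc ∑ r ∈ range R, min 1 (z ^ 2 / ((r : ℝ) + 1) ^ 2)
      ≤ ∑ r ∈ range R, 4 * z * (z / ((r : ℕ) + z) - z / ((r + 1 : ℕ) + z)) := by
        gcongr with r
        exact_mod_cast min_one_sq_div_sq_le hz r.cast_nonneg
    _ = 4 * z * (z / ((0 : ℕ) + z) - z / (R + z)) := by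
        rw [← mul_sum, sum_range_sub' fun r : ℕ => z / (r + z)]
    _ ≤ 4 * z := by
        refine mul_le_of_le_one_right (by positivity) ?_
        rw [Nat.cast_zero, zero_add, div_self hz.ne']
        exact sub_le_self _ (by positivity)

variable {E : Type*} [SeminormedAddCommGroup E]

lemma sq_norm_sub_div_sq_le {u v : E} {d : ℝ} (hd : 0 < d) (huv : ‖u - v‖ ≤ d) :
    ‖u - v‖ ^ 2 / d ^ 2 ≤
      min 1 ((2 * ‖u‖) ^ 2 / d ^ 2) + min 1 ((2 * ‖v‖) ^ 2 / d ^ 2) := by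
  have hone : ‖u - v‖ ^ 2 / d ^ 2 ≤ 1 := div_le_one_of_le₀ (by gcongr) (by positivity)
  have htriangle := norm_sub_le u v
  rcases le_total ‖v‖ ‖u‖ with h | h
  · refine le_add_of_le_of_nonneg (le_min hone ?_) (by positivity)
    gcongr
    linarith
  · refine le_add_of_nonneg_of_le (by positivity) (le_min hone ?_)
    gcongr
    linarith

/- The left side is a discrete `H^{1/2}` energy; the Lipschitz condition makes it a bound by the
`ℓ¹` norm of `y` rather than by its square. -/
lemma sum_sq_norm_sub_div_sq_le {y : ℕ → E} (hy : ∀ j, ‖y (j + 1) - y j‖ ≤ 1) (L : ℕ) :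
    ∑ j ∈ range L, ∑ r ∈ range L, ‖y (j + (r + 1)) - y j‖ ^ 2 / ((r : ℝ) + 1) ^ 2 ≤
      16 * ∑ k ∈ range (2 * L), ‖y k‖ := by
  let h (k r : ℕ) : ℝ := min 1 ((2 * ‖y k‖) ^ 2 / ((r : ℝ) + 1) ^ 2)
  have h_nonneg (k r) : 0 ≤ h k r := by positivity
  have hlip (j r : ℕ) : ‖y (j + (r + 1)) - y j‖ ≤ r + 1 := by
    have := dist_le_Ico_sum_of_dist_le (f := y) (d := fun _ => 1) (Nat.le_add_right j (r + 1))
      fun {k} _ _ => by simpa [dist_eq_norm'] using hy k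
    simpa [dist_eq_norm'] using this
  have hleft : ∑ j ∈ range L, ∑ r ∈ range L, h j r ≤
      ∑ k ∈ range (2 * L), ∑ r ∈ range L, h k r :=
    sum_le_sum_of_subset_of_nonneg (range_mono (by lia)) fun k _ _ => sum_nonneg fun r _ =>
      h_nonneg k r
  have hright : ∑ j ∈ range L, ∑ r ∈ range L, h (j + (r + 1)) r ≤
      ∑ k ∈ range (2 * L), ∑ r ∈ range L, h k r := by
    rw [sum_comm, sum_comm (s := range (2 * L))]
    refine sum_le_sum fun r hr => ?_
    rw [← sum_image (f := fun k => h k r) (add_left_injective (r + 1)).injOn]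
    refine sum_le_sum_of_subset_of_nonneg ?_ fun k _ _ => h_nonneg k r
    intro k hk
    simp only [mem_image, mem_range] at hk hr ⊢
    lia
  calc ∑ j ∈ range L, ∑ r ∈ range L, ‖y (j + (r + 1)) - y j‖ ^ 2 / ((r : ℝ) + 1) ^ 2
      ≤ ∑ j ∈ range L, ∑ r ∈ range L, (h (j + (r + 1)) r + h j r) := by
        gcongr with j _ r
        exact sq_norm_sub_div_sq_le (by positivity) (hlip j r)
    _ ≤ 2 * ∑ k ∈ range (2 * L), ∑ r ∈ range L, h k r := by
        simp only [sum_add_distrib]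
        linarith
    _ ≤ 2 * ∑ k ∈ range (2 * L), 4 * (2 * ‖y k‖) := by
        gcongr with k
        exact sum_min_one_sq_div_sq_le (by positivity) L
    _ = 16 * ∑ k ∈ range (2 * L), ‖y k‖ := by
        simp only [mul_sum]
        exact sum_congr rfl fun k _ => by ring

end Interpolation

lemma exists_injOn_filter_lt_eq_image_range {ι α : Type*} [Fintype ι] [Nonempty ι]
    [DecidableEq ι] [LinearOrder α] {f : ι → α} (hf : Function.Injective f) :
    ∃ b : ℕ → ι, Set.InjOn b (Set.Iio (Fintype.card ι)) ∧
      ∀ k < Fintype.card ι, ({i | f i < f (b k)} : Finset ι) = (range k).image b := by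
  have : NeZero (Fintype.card ι) := ⟨Fintype.card_ne_zero⟩
  let e := (Fintype.equivFin ι).symm
  let c := (Tuple.sort (f ∘ e)).trans e
  have hc : StrictMono (f ∘ c) :=
    (Tuple.monotone_sort (f ∘ e)).strictMono_of_injective (hf.comp c.injective)
  refine ⟨fun i => c (Fin.ofNat _ i), fun i hi j hj hij => ?_, fun k hk => ?_⟩
  · simpa [Nat.mod_eq_of_lt hi, Nat.mod_eq_of_lt hj] using congrArg Fin.val (c.injective hij)
  · ext i
    obtain ⟨i, rfl⟩ := c.surjective i
    have hlt : f (c i) < f (c (Fin.ofNat _ k)) ↔ (i : ℕ) < k := by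
      simpa [Fin.lt_def, Nat.mod_eq_of_lt hk] using hc.lt_iff_lt (a := i) (b := Fin.ofNat _ k)
    simp only [mem_filter_univ, hlt, mem_image, mem_range, c.injective.eq_iff]
    refine ⟨fun hi => ⟨i, hi, by simp⟩, ?_⟩
    rintro ⟨j, hj, rfl⟩
    exact (Nat.mod_le _ _).trans_lt hj

section BoundedOrthogonal

variable {𝕜 F Ω ι : Type*} [RCLike 𝕜] [NormedAddCommGroup F] [InnerProductSpace 𝕜 F]
  [MeasurableSpace Ω]

variable (𝕜) in
/-- A uniformly bounded orthogonal system of `F`-valued functions, normalized so that all the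
functions are bounded by `1` and have the same squared `L²` norm `c`. -/
structure IsBoundedOrthogonal (φ : ι → Ω → F) (c : ℝ) (μ : Measure Ω) : Prop where
  aestronglyMeasurable : ∀ i, AEStronglyMeasurable (φ i) μ
  norm_le_one : ∀ i, ∀ᵐ x ∂μ, ‖φ i x‖ ≤ 1
  integral_sq_norm : ∀ i, ∫ x, ‖φ i x‖ ^ 2 ∂μ = c
  integral_inner_of_ne : ∀ i j, i ≠ j → ∫ x, ⟪φ i x, φ j x⟫_𝕜 ∂μ = 0

namespace IsBoundedOrthogonal

variable {φ : ι → Ω → F} {c C : ℝ} {L : ℕ} {μ : Measure Ω}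

lemma ae_sum_sq_norm_sum_Ico_div_sq_le (hφ : IsBoundedOrthogonal 𝕜 φ c μ) (b : ℕ → ι) (L : ℕ) :
    ∀ᵐ x ∂μ, ∑ j ∈ range L, ∑ r ∈ range L,
        ‖∑ i ∈ Ico j (j + (r + 1)), φ (b i) x‖ ^ 2 / ((r : ℝ) + 1) ^ 2 ≤
      16 * ∑ k ∈ range (2 * L), ‖∑ i ∈ range k, φ (b i) x‖ := by
  filter_upwards [ae_all_iff.2 fun i => hφ.norm_le_one (b i)] with x hx
  have hincrement (j r : ℕ) : ∑ i ∈ Ico j (j + (r + 1)), φ (b i) x =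
      ∑ i ∈ range (j + (r + 1)), φ (b i) x - ∑ i ∈ range j, φ (b i) x :=
    sum_Ico_eq_sub _ (Nat.le_add_right _ _)
  simp_rw [hincrement]
  exact sum_sq_norm_sub_div_sq_le (y := fun k => ∑ i ∈ range k, φ (b i) x)
    (fun j => by simpa [sum_range_succ] using hx j) L

variable [IsFiniteMeasure μ]

lemma memLp_sum_comp {κ : Type*} (hφ : IsBoundedOrthogonal 𝕜 φ c μ) (b : κ → ι)
    (T : Finset κ) : MemLp (fun x => ∑ i ∈ T, φ (b i) x) 2 μ :=
  memLp_finsetSum T fun i _ =>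
    .of_bound (hφ.aestronglyMeasurable (b i)) 1 (hφ.norm_le_one (b i))

lemma integral_sq_norm_sum (hφ : IsBoundedOrthogonal 𝕜 φ c μ) (T : Finset ι) :
    ∫ x, ‖∑ i ∈ T, φ i x‖ ^ 2 ∂μ = #T * c := by
  classical
  have hint (i j) : Integrable (fun x => ⟪φ i x, φ j x⟫_𝕜) μ := by
    refine .of_bound ((hφ.aestronglyMeasurable i).inner (hφ.aestronglyMeasurable j)) 1 ?_
    filter_upwards [hφ.norm_le_one i, hφ.norm_le_one j] with x hi hj
    exact (norm_inner_le_norm _ _).trans (mul_le_one₀ hi (norm_nonneg _) hj)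
  have hinner (i j) : ∫ x, ⟪φ i x, φ j x⟫_𝕜 ∂μ = if i = j then (c : 𝕜) else 0 := by
    split_ifs with hij
    · subst hij
      simp_rw [inner_self_eq_norm_sq_to_K, ← RCLike.ofReal_pow]
      rw [integral_ofReal, hφ.integral_sq_norm]
    · exact hφ.integral_inner_of_ne i j hij
  have hcast : ((∫ x, ‖∑ i ∈ T, φ i x‖ ^ 2 ∂μ : ℝ) : 𝕜) = (#T * c : ℝ) := by
    rw [← integral_ofReal]
    simp_rw [RCLike.ofReal_pow, ← inner_self_eq_norm_sq_to_K (𝕜 := 𝕜), sum_inner, inner_sum]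
    rw [integral_finsetSum _ fun i _ => integrable_finsetSum _ fun j _ => hint i j]
    simp_rw [integral_finsetSum _ fun j _ => hint _ j, hinner]
    simp
  exact_mod_cast hcast

lemma sum_integral_sq_norm_sum_Ico_div_sq (hφ : IsBoundedOrthogonal 𝕜 φ c μ) {b : ℕ → ι}
    (hb : Set.InjOn b (Set.Iio (2 * L))) :
    ∑ j ∈ range L, ∑ r ∈ range L,
        (∫ x, ‖∑ i ∈ Ico j (j + (r + 1)), φ (b i) x‖ ^ 2 ∂μ) / ((r : ℝ) + 1) ^ 2 =
      L * c * harmonic L := by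
  classical
  have hblock : ∀ j ∈ range L, ∀ r ∈ range L,
      (∫ x, ‖∑ i ∈ Ico j (j + (r + 1)), φ (b i) x‖ ^ 2 ∂μ) / ((r : ℝ) + 1) ^ 2 =
        c * ((r : ℝ) + 1)⁻¹ := by
    intro j hj r hr
    have hinj : Set.InjOn b (Ico j (j + (r + 1))) := hb.mono fun i hi => by
      simp only [coe_Ico, Set.mem_Ico, mem_range, Set.mem_Iio] at hi hj hr ⊢
      lia
    have himage (x) : ∑ i ∈ Ico j (j + (r + 1)), φ (b i) x =
        ∑ i ∈ (Ico j (j + (r + 1))).image b, φ i x :=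
      (sum_image (f := fun i => φ i x) hinj).symm
    simp_rw [himage]
    rw [hφ.integral_sq_norm_sum, card_image_of_injOn hinj, Nat.card_Ico, add_tsub_cancel_left]
    push_cast
    field_simp
  rw [sum_congr rfl fun j hj => sum_congr rfl (hblock j hj)]
  simp [harmonic, mul_sum, mul_assoc]

theorem log_le_of_integral_norm_sum_range_le (hφ : IsBoundedOrthogonal 𝕜 φ c μ) (hc : 0 < c)
    (hL : 0 < L) {b : ℕ → ι} (hb : Set.InjOn b (Set.Iio (2 * L)))
    (hC : ∀ k < 2 * L, ∫ x, ‖∑ i ∈ range k, φ (b i) x‖ ∂μ ≤ C * c) :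
    Real.log (L + 1) ≤ 32 * C := by
  have hmem (T : Finset ℕ) : MemLp (fun x => ∑ i ∈ T, φ (b i) x) 2 μ :=
    hφ.memLp_sum_comp b T
  have hsq (T : Finset ℕ) (d : ℝ) :
      Integrable (fun x => ‖∑ i ∈ T, φ (b i) x‖ ^ 2 / d) μ :=
    (hmem T).norm.integrable_sq.div_const d
  have hnorm (T : Finset ℕ) : Integrable (fun x => ‖∑ i ∈ T, φ (b i) x‖) μ :=
    ((hmem T).integrable one_le_two).norm
  have hLc : 0 < L * c := by positivity
  refine le_of_mul_le_mul_left ?_ hLc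
  calc L * c * Real.log (L + 1)
      ≤ L * c * harmonic L := by
        gcongr
        exact_mod_cast log_add_one_le_harmonic L
    _ = ∫ x, ∑ j ∈ range L, ∑ r ∈ range L,
          ‖∑ i ∈ Ico j (j + (r + 1)), φ (b i) x‖ ^ 2 / ((r : ℝ) + 1) ^ 2 ∂μ := by
        rw [← hφ.sum_integral_sq_norm_sum_Ico_div_sq hb,
          integral_finsetSum _ fun _ _ => integrable_finsetSum _ fun _ _ => hsq _ _]
        simp_rw [integral_finsetSum _ fun _ _ => hsq _ _, integral_div]
    _ ≤ ∫ x, 16 * ∑ k ∈ range (2 * L), ‖∑ i ∈ range k, φ (b i) x‖ ∂μ :=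
        integral_mono_ae
          (integrable_finsetSum _ fun _ _ => integrable_finsetSum _ fun _ _ => hsq _ _)
          ((integrable_finsetSum _ fun _ _ => hnorm _).const_mul 16)
          (hφ.ae_sum_sq_norm_sum_Ico_div_sq_le b L)
    _ = 16 * ∑ k ∈ range (2 * L), ∫ x, ‖∑ i ∈ range k, φ (b i) x‖ ∂μ := by
        rw [integral_const_mul, integral_finsetSum _ fun _ _ => hnorm _]
    _ ≤ 16 * ∑ _ ∈ range (2 * L), C * c := by
        gcongr with k hk
        exact hC k (mem_range.1 hk)
    _ = L * c * (32 * C) := by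
        simp
        ring

theorem log_le_of_integral_norm_sum_filter_lt_le {α : Type*} [LinearOrder α] [Fintype ι]
    (hφ : IsBoundedOrthogonal 𝕜 φ c μ) (hc : 0 < c) (hL : 0 < L) (hcard : 2 * L ≤ Fintype.card ι)
    {f : ι → α} (hf : Function.Injective f)
    (hC : ∀ k, ∫ x, ‖∑ i with f i < f k, φ i x‖ ∂μ ≤ C * c) :
    Real.log (L + 1) ≤ 32 * C := by
  classical
  have : Nonempty ι := Fintype.card_pos_iff.1 (by lia)
  obtain ⟨b, hb, hfilter⟩ := exists_injOn_filter_lt_eq_image_range hf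
  refine hφ.log_le_of_integral_norm_sum_range_le hc hL (hb.mono (Set.Iio_subset_Iio hcard))
    fun k hk => ?_
  have hsum (x) : ∑ i ∈ range k, φ (b i) x = ∑ i with f i < f (b k), φ i x := by
    rw [hfilter k (hk.trans_le hcard), sum_image (hb.mono fun i hi => ?_)]
    exact (mem_range.1 hi).trans (hk.trans_le hcard)
  simp_rw [hsum]
  exact hC (b k)

end IsBoundedOrthogonal

end BoundedOrthogonal

section Bases

variable {𝕜 E ι κ : Type*} [NontriviallyNormedField 𝕜] [NormedAddCommGroup E] [NormedSpace 𝕜 E]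

variable (𝕜) in
/-- The uniform partial-sum bound with constant `C` for a sequence in a normed space: the
condition that singles out basic sequences among sequences of nonzero vectors. -/
def HasPartialSumBound (y : ℕ → E) (C : ℝ) : Prop :=
  ∀ m n, m ≤ n → ∀ a : ℕ → 𝕜, ‖∑ i ∈ range m, a i • y i‖ ≤ C * ‖∑ i ∈ range n, a i • y i‖

lemma HasPartialSumBound.norm_sum_filter_lt_le {y : ℕ → E} {C : ℝ}
    (hy : HasPartialSumBound 𝕜 y C) (T : Finset ι) (f : ι → ℕ) (a : ι → 𝕜) (m : ℕ) :
    ‖∑ i ∈ T with f i < m, a i • y (f i)‖ ≤ C * ‖∑ i ∈ T, a i • y (f i)‖ := by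
  have hfiber (k : ℕ) : ∑ j ∈ range k, (∑ i ∈ T with f i = j, a i) • y j =
      ∑ i ∈ T with f i < k, a i • y (f i) := by
    simp_rw [sum_smul, sum_filter]
    rw [sum_comm]
    refine sum_congr rfl fun i _ => ?_
    simp
  have hall : ∀ i ∈ T, f i < max m (T.sup f + 1) := fun i hi =>
    lt_max_of_lt_right (Nat.lt_succ_of_le (le_sup hi))
  have := hy m _ (le_max_left m (T.sup f + 1)) fun j => ∑ i ∈ T with f i = j, a i
  rwa [hfiber, hfiber, filter_true_of_mem hall] at this

variable (𝕜) in
/-- An Auerbach basis: a fundamental and total biorthogonal system of unit vectors and unit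
functionals, indexed by an arbitrary type. -/
structure IsAuerbachBasis [DecidableEq ι] (x : ι → E) (xs : ι → E →L[𝕜] 𝕜) : Prop where
  biorthogonal : ∀ i j, xs i (x j) = if i = j then 1 else 0
  fundamental : (Submodule.span 𝕜 (Set.range x)).topologicalClosure = ⊤
  total : ∀ v, (∀ i, xs i v = 0) → v = 0
  norm_vector : ∀ i, ‖x i‖ = 1
  norm_functional : ∀ i, ‖xs i‖ = 1

namespace IsAuerbachBasis

variable [DecidableEq ι] [DecidableEq κ] {x : ι → E} {xs : ι → E →L[𝕜] 𝕜}

lemma of_norm_le_one (biorthogonal : ∀ i j, xs i (x j) = if i = j then 1 else 0)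
    (fundamental : (Submodule.span 𝕜 (Set.range x)).topologicalClosure = ⊤)
    (total : ∀ v, (∀ i, xs i v = 0) → v = 0) (hx : ∀ i, ‖x i‖ ≤ 1) (hxs : ∀ i, ‖xs i‖ ≤ 1) :
    IsAuerbachBasis 𝕜 x xs := by
  have one_le (i) : 1 ≤ ‖xs i‖ * ‖x i‖ := by
    simpa [biorthogonal] using (xs i).le_opNorm (x i)
  refine ⟨biorthogonal, fundamental, total, fun i => (hx i).antisymm ?_,
    fun i => (hxs i).antisymm ?_⟩
  · exact (one_le i).trans (mul_le_of_le_one_left (norm_nonneg _) (hxs i))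
  · exact (one_le i).trans (mul_le_of_le_one_right (norm_nonneg _) (hx i))

lemma comp_equiv (h : IsAuerbachBasis 𝕜 x xs) (e : κ ≃ ι) :
    IsAuerbachBasis 𝕜 (x ∘ e) (xs ∘ e) where
  biorthogonal i j := by simp [h.biorthogonal]
  fundamental := by rw [e.surjective.range_comp, h.fundamental]
  total v hv := h.total v (e.surjective.forall.2 hv)
  norm_vector i := h.norm_vector (e i)
  norm_functional i := h.norm_functional (e i)

end IsAuerbachBasis

end Bases

section Hadamard

variable {𝕜 ι : Type*} [RCLike 𝕜] [Fintype ι] [DecidableEq ι] {H : Matrix ι ι 𝕜}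

lemma norm_hadamard_apply (hH : H.IsHadamard) (a s : ι) : ‖H a s‖ = 1 :=
  CStarRing.norm_of_mem_unitary (hH.apply_mem a s)

lemma sum_hadamard_mul_conj (hH : H.IsHadamard) (a b : ι) :
    ∑ s, H a s * conj (H b s) = if a = b then (Fintype.card ι : 𝕜) else 0 := by
  simpa [Matrix.mul_apply, Matrix.one_apply] using congr_fun₂ hH.mul_conjTranspose a b

lemma sum_conj_mul_hadamard (hH : H.IsHadamard) (s t : ι) :
    ∑ a, conj (H a s) * H a t = if s = t then (Fintype.card ι : 𝕜) else 0 := by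
  simpa [Matrix.mul_apply, Matrix.one_apply] using congr_fun₂ hH.conjTranspose_mul s t

lemma isBoundedOrthogonal_smul_hadamard [MeasurableSpace ι] [MeasurableSingletonClass ι]
    (hH : H.IsHadamard) {u : ι → 𝕜} (hu : ∀ a, ‖u a‖ = 1) :
    IsBoundedOrthogonal 𝕜 (fun a s => u a * H a s) (Fintype.card ι) Measure.count where
  aestronglyMeasurable a := (StronglyMeasurable.of_discrete).aestronglyMeasurable
  norm_le_one a := .of_forall fun s => by simp [hu, norm_hadamard_apply hH]
  integral_sq_norm a := by simp [hu, norm_hadamard_apply hH]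
  integral_inner_of_ne a b hab := by
    have hsum : ∑ s, ⟪u a * H a s, u b * H b s⟫_𝕜 =
        u b * conj (u a) * ∑ s, H b s * conj (H a s) := by
      simp only [RCLike.inner_apply, map_mul, mul_sum]
      exact sum_congr rfl fun s _ => by ring
    rw [integral_count, hsum, sum_hadamard_mul_conj hH, if_neg hab.symm, mul_zero]

lemma isHadamard_stdAddChar (N : ℕ) [NeZero N] :
    (Matrix.of fun a s : ZMod N => (ZMod.stdAddChar (a * s) : ℂ)).IsHadamard := by
  refine .of_mul_conjTranspose (fun a s => ?_) ?_ (.of_ne_zero (by simp [NeZero.ne]))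
  · simp [Unitary.mem_iff, RCLike.conj_mul, RCLike.mul_conj]
  · ext a b
    have h := AddChar.sum_mulShift (a - b) (ZMod.isPrimitive_stdAddChar N)
    simp only [sub_eq_zero, ZMod.card] at h
    calc ∑ s : ZMod N, ZMod.stdAddChar (a * s) * conj (ZMod.stdAddChar (b * s))
        = ∑ s : ZMod N, ZMod.stdAddChar (s * (a - b)) := by
          refine sum_congr rfl fun s _ => ?_
          rw [← AddChar.map_neg_eq_conj, ← AddChar.map_add_eq_mul]
          congr 1
          ring
      _ = ((Fintype.card (ZMod N) : ℂ) • (1 : Matrix (ZMod N) (ZMod N) ℂ)) a b := by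
          simp [h, Matrix.one_apply]

end Hadamard

section Block

variable {𝕜 ι J : Type*} [RCLike 𝕜]

lemma l1_sum_smul_apply (T : Finset ι) (u : ι → 𝕜) (v : ι → ℓ¹(J, 𝕜)) (j : J) :
    (∑ i ∈ T, u i • v i) j = ∑ i ∈ T, u i * v i j := by
  rw [lp.coeFn_sum, Finset.sum_apply]
  rfl

variable [Fintype ι]

lemma sum_norm_apply_embedding_le_norm (f : ι ↪ J) (v : ℓ¹(J, 𝕜)) : ∑ s, ‖v (f s)‖ ≤ ‖v‖ := by
  simpa using lp.sum_rpow_le_norm_rpow (by simp) v (univ.map f)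

/-- The functional reading off the coefficient along the `a`-th row of the Hadamard matrix `H` on
the block of coordinates of `ℓ¹` that `f` embeds; see `blockVector`. -/
noncomputable def blockFunctional (H : Matrix ι ι 𝕜) (f : ι ↪ J) (a : ι) :
    ℓ¹(J, 𝕜) →L[𝕜] 𝕜 :=
  ∑ s, conj (H a s) • lp.evalCLM 𝕜 (fun _ : J => 𝕜) 1 (f s)

lemma blockFunctional_apply (H : Matrix ι ι 𝕜) (f : ι ↪ J) (a : ι) (v : ℓ¹(J, 𝕜)) :
    blockFunctional H f a v = ∑ s, conj (H a s) * v (f s) := by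
  rw [blockFunctional, _root_.sum_apply]
  rfl

lemma norm_blockFunctional_le_one [DecidableEq ι] {H : Matrix ι ι 𝕜}
    (hH : H.IsHadamard) (f : ι ↪ J) (a : ι) : ‖blockFunctional H f a‖ ≤ 1 := by
  refine ContinuousLinearMap.opNorm_le_bound _ zero_le_one fun v => ?_
  rw [blockFunctional_apply, one_mul]
  calc ‖∑ s, conj (H a s) * v (f s)‖
      ≤ ∑ s, ‖conj (H a s) * v (f s)‖ := norm_sum_le _ _
    _ = ∑ s, ‖v (f s)‖ := by simp [norm_hadamard_apply hH]
    _ ≤ ‖v‖ := sum_norm_apply_embedding_le_norm f v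

lemma sum_mul_blockFunctional [DecidableEq ι] {H : Matrix ι ι 𝕜}
    (hH : H.IsHadamard) (f : ι ↪ J) (v : ℓ¹(J, 𝕜)) (t : ι) :
    ∑ a, H a t * blockFunctional H f a v = Fintype.card ι * v (f t) := by
  calc ∑ a, H a t * blockFunctional H f a v
      = ∑ s, (∑ a, conj (H a s) * H a t) * v (f s) := by
        simp only [blockFunctional_apply, mul_sum, sum_mul]
        rw [sum_comm]
        exact sum_congr rfl fun s _ => sum_congr rfl fun a _ => by ring
    _ = Fintype.card ι * v (f t) := by simp [sum_conj_mul_hadamard hH]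

variable [DecidableEq J]

/-- The `a`-th row of `H`, placed on the block of coordinates of `ℓ¹` that `f` embeds and divided
by the size of the block, which makes it a unit vector when `H` is a Hadamard matrix. -/
noncomputable def blockVector (H : Matrix ι ι 𝕜) (f : ι ↪ J) (a : ι) : ℓ¹(J, 𝕜) :=
  (Fintype.card ι : 𝕜)⁻¹ • ∑ s, H a s • lp.single 1 (f s) 1

lemma blockVector_apply (H : Matrix ι ι 𝕜) (f : ι ↪ J) (a s : ι) :
    blockVector H f a (f s) = (Fintype.card ι : 𝕜)⁻¹ * H a s := by
  classical
  rw [blockVector, lp.coeFn_smul, Pi.smul_apply, l1_sum_smul_apply]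
  simp [lp.single_apply, Pi.single_apply]

lemma blockVector_apply_of_notMem_range (H : Matrix ι ι 𝕜) {f : ι ↪ J} (a : ι) {j : J}
    (hj : j ∉ Set.range f) : blockVector H f a j = 0 := by
  have hne (s) : j ≠ f s := fun h => hj ⟨s, h.symm⟩
  rw [blockVector, lp.coeFn_smul, Pi.smul_apply, l1_sum_smul_apply]
  simp [lp.single_apply, hne]

lemma blockFunctional_blockVector_of_disjoint {κ : Type*} [Fintype κ] (H : Matrix ι ι 𝕜)
    (K : Matrix κ κ 𝕜) {f : ι ↪ J} {g : κ ↪ J} (hfg : Disjoint (Set.range f) (Set.range g))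
    (a : ι) (b : κ) : blockFunctional H f a (blockVector K g b) = 0 := by
  rw [blockFunctional_apply]
  refine sum_eq_zero fun s _ => ?_
  rw [blockVector_apply_of_notMem_range K b (hfg.notMem_of_mem_left ⟨s, rfl⟩), mul_zero]

lemma sum_norm_sum_mul_le_norm_sum_blockVector (H : Matrix ι ι 𝕜) (f : ι ↪ J)
    (T : Finset ι) (u : ι → 𝕜) :
    ∑ s, ‖∑ a ∈ T, u a * H a s‖ ≤ ‖∑ a ∈ T, u a • blockVector H f a‖ * Fintype.card ι := by
  cases isEmpty_or_nonempty ι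
  · simp
  have happly (s) : (∑ a ∈ T, u a • blockVector H f a) (f s) =
      (Fintype.card ι : 𝕜)⁻¹ * ∑ a ∈ T, u a * H a s := by
    simp only [l1_sum_smul_apply, blockVector_apply, mul_sum, mul_left_comm]
  have h := sum_norm_apply_embedding_le_norm f (∑ a ∈ T, u a • blockVector H f a)
  simp only [happly, norm_mul, norm_inv, RCLike.norm_natCast, ← mul_sum] at h
  rwa [inv_mul_le_iff₀' (by positivity)] at h

variable [DecidableEq ι] {H : Matrix ι ι 𝕜}

lemma norm_blockVector_le_one (hH : H.IsHadamard) (f : ι ↪ J) (a : ι) :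
    ‖blockVector H f a‖ ≤ 1 := by
  calc ‖blockVector H f a‖
      ≤ (Fintype.card ι : ℝ)⁻¹ * ∑ s, ‖H a s • lp.single (E := fun _ : J => 𝕜) 1 (f s) 1‖ := by
        rw [blockVector, norm_smul, norm_inv, RCLike.norm_natCast]
        gcongr
        exact norm_sum_le _ _
    _ = (Fintype.card ι : ℝ)⁻¹ * Fintype.card ι := by
        simp [norm_smul, norm_hadamard_apply hH, lp.norm_single]
    _ ≤ 1 := inv_mul_le_one

lemma blockFunctional_blockVector (hH : H.IsHadamard) (f : ι ↪ J) (a b : ι) :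
    blockFunctional H f a (blockVector H f b) = if a = b then 1 else 0 := by
  have : Nonempty ι := ⟨a⟩
  calc blockFunctional H f a (blockVector H f b)
      = (Fintype.card ι : 𝕜)⁻¹ * ∑ s, H b s * conj (H a s) := by
        simp only [blockFunctional_apply, blockVector_apply, mul_sum]
        exact sum_congr rfl fun s _ => by ring
    _ = if a = b then 1 else 0 := by
        rw [sum_hadamard_mul_conj hH]
        simp [eq_comm]

lemma sum_conj_smul_blockVector (hH : H.IsHadamard) (f : ι ↪ J) (t : ι) :
    ∑ a, conj (H a t) • blockVector H f a = lp.single 1 (f t) 1 := by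
  have : Nonempty ι := ⟨t⟩
  calc ∑ a, conj (H a t) • blockVector H f a
      = ∑ s, ((Fintype.card ι : 𝕜)⁻¹ * ∑ a, conj (H a t) * H a s) • lp.single 1 (f s) 1 := by
        simp only [blockVector, smul_sum, mul_sum, sum_smul, smul_smul]
        rw [sum_comm]
        exact sum_congr rfl fun s _ => sum_congr rfl fun a _ => by rw [mul_left_comm]
    _ = lp.single 1 (f t) 1 := by simp [sum_conj_mul_hadamard hH]

theorem log_le_of_hasPartialSumBound_blockVector (hH : H.IsHadamard) (f : ι ↪ J)
    {y : ℕ → ℓ¹(J, 𝕜)} {C : ℝ} (hy : HasPartialSumBound 𝕜 y C) {g : ι → ℕ}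
    (hg : Function.Injective g) (hyg : ∀ a, y (g a) = blockVector H f a) {L : ℕ} (hL : 0 < L)
    (hcard : 2 * L ≤ Fintype.card ι) : Real.log (L + 1) ≤ 32 * C := by
  let _ : MeasurableSpace ι := ⊤
  have hpos : 0 < Fintype.card ι := by lia
  obtain ⟨t⟩ := Fintype.card_pos_iff.1 hpos
  have hsystem := isBoundedOrthogonal_smul_hadamard hH (u := fun a => conj (H a t))
    (by simp [norm_hadamard_apply hH])
  refine hsystem.log_le_of_integral_norm_sum_filter_lt_le (by exact_mod_cast hpos) hL hcard hg
    fun k => ?_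
  rw [integral_count]
  refine (sum_norm_sum_mul_le_norm_sum_blockVector H f _ _).trans ?_
  gcongr
  have hbound := hy.norm_sum_filter_lt_le univ g (fun a => conj (H a t)) (g k)
  simpa [hyg, sum_conj_smul_blockVector hH, lp.norm_single] using hbound

end Block

section Family

variable {𝕜 J κ : Type*} {ι : κ → Type*}

/-- The `n`-th block of coordinates in the partition of `J` given by `e`. -/
def blockEmbedding (e : (Σ n, ι n) ≃ J) (n : κ) : ι n ↪ J :=
  (Function.Embedding.sigmaMk n).trans e.toEmbedding

lemma blockEmbedding_apply (e : (Σ n, ι n) ≃ J) (n : κ) (s : ι n) :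
    blockEmbedding e n s = e ⟨n, s⟩ := rfl

lemma disjoint_range_blockEmbedding (e : (Σ n, ι n) ≃ J) {m n : κ} (hmn : m ≠ n) :
    Disjoint (Set.range (blockEmbedding e m)) (Set.range (blockEmbedding e n)) := by
  rw [Set.disjoint_left]
  rintro _ ⟨s, rfl⟩ ⟨t, ht⟩
  exact hmn (congrArg Sigma.fst (e.injective ht)).symm

variable [RCLike 𝕜] [∀ n, Fintype (ι n)]

/-- The coefficient functionals of `hadamardVector`. -/
noncomputable def hadamardFunctional (H : ∀ n, Matrix (ι n) (ι n) 𝕜) (e : (Σ n, ι n) ≃ J)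
    (p : Σ n, ι n) : ℓ¹(J, 𝕜) →L[𝕜] 𝕜 :=
  blockFunctional (H p.1) (blockEmbedding e p.1) p.2

lemma eq_zero_of_hadamardFunctional_eq_zero [∀ n, DecidableEq (ι n)]
    {H : ∀ n, Matrix (ι n) (ι n) 𝕜} (hH : ∀ n, (H n).IsHadamard) (e : (Σ n, ι n) ≃ J)
    {v : ℓ¹(J, 𝕜)} (hv : ∀ p, hadamardFunctional H e p v = 0) : v = 0 := by
  ext j
  obtain ⟨⟨n, t⟩, rfl⟩ := e.surjective j
  have : Nonempty (ι n) := ⟨t⟩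
  have hcoord := sum_mul_blockFunctional (hH n) (blockEmbedding e n) v t
  have hzero (a) : blockFunctional (H n) (blockEmbedding e n) a v = 0 := hv ⟨n, a⟩
  simpa [hzero, blockEmbedding_apply] using hcoord.symm

variable [DecidableEq J]

/-- The normalized rows of all the Hadamard matrices `H n`, the coordinates of `ℓ¹` being
partitioned by `e` into blocks of the sizes of these matrices. -/
noncomputable def hadamardVector (H : ∀ n, Matrix (ι n) (ι n) 𝕜) (e : (Σ n, ι n) ≃ J)
    (p : Σ n, ι n) : ℓ¹(J, 𝕜) :=
  blockVector (H p.1) (blockEmbedding e p.1) p.2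

variable [∀ n, DecidableEq (ι n)] {H : ∀ n, Matrix (ι n) (ι n) 𝕜}

lemma hadamardFunctional_hadamardVector [DecidableEq κ] (hH : ∀ n, (H n).IsHadamard)
    (e : (Σ n, ι n) ≃ J) (p q : Σ n, ι n) :
    hadamardFunctional H e p (hadamardVector H e q) = if p = q then 1 else 0 := by
  obtain ⟨m, a⟩ := p
  obtain ⟨n, b⟩ := q
  rcases eq_or_ne m n with rfl | hmn
  · simp [hadamardFunctional, hadamardVector, blockFunctional_blockVector (hH m)]
  · rw [if_neg fun h => hmn (congrArg Sigma.fst h)]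
    exact blockFunctional_blockVector_of_disjoint _ _ (disjoint_range_blockEmbedding e hmn) a b

lemma single_mem_span_hadamardVector (hH : ∀ n, (H n).IsHadamard) (e : (Σ n, ι n) ≃ J)
    (j : J) (z : 𝕜) :
    lp.single 1 j z ∈ Submodule.span 𝕜 (Set.range (hadamardVector H e)) := by
  obtain ⟨⟨n, t⟩, rfl⟩ := e.surjective j
  have hsingle := sum_conj_smul_blockVector (hH n) (blockEmbedding e n) t
  rw [← mul_one z, ← smul_eq_mul, lp.single_smul, ← blockEmbedding_apply, ← hsingle]
  exact Submodule.smul_mem _ _ <| Submodule.sum_mem _ fun a _ =>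
    Submodule.smul_mem _ _ <| Submodule.subset_span ⟨⟨n, a⟩, rfl⟩

lemma topologicalClosure_span_hadamardVector (hH : ∀ n, (H n).IsHadamard)
    (e : (Σ n, ι n) ≃ J) :
    (Submodule.span 𝕜 (Set.range (hadamardVector H e))).topologicalClosure = ⊤ := by
  rw [Submodule.eq_top_iff']
  refine fun v => mem_closure_of_tendsto (lp.hasSum_single ENNReal.one_ne_top v) ?_
  exact .of_forall fun T => Submodule.sum_mem _ fun j _ =>
    single_mem_span_hadamardVector hH e j (v j)

theorem isAuerbachBasis_hadamardVector [DecidableEq κ] (hH : ∀ n, (H n).IsHadamard)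
    (e : (Σ n, ι n) ≃ J) :
    IsAuerbachBasis 𝕜 (hadamardVector H e) (hadamardFunctional H e) :=
  .of_norm_le_one (hadamardFunctional_hadamardVector hH e)
    (topologicalClosure_span_hadamardVector hH e)
    (fun _ => eq_zero_of_hadamardFunctional_eq_zero hH e)
    (fun p => norm_blockVector_le_one (hH p.1) _ _)
    fun p => norm_blockFunctional_le_one (hH p.1) _ _

theorem not_hasPartialSumBound_hadamardVector (hH : ∀ n, (H n).IsHadamard)
    (hcard : ∀ N, ∃ n, N ≤ Fintype.card (ι n)) (e : (Σ n, ι n) ≃ J) (τ : ℕ ≃ Σ n, ι n) (C : ℝ) :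
    ¬ HasPartialSumBound 𝕜 (hadamardVector H e ∘ τ) C := by
  intro hC
  obtain ⟨L, hL⟩ := exists_nat_gt (Real.exp (32 * C))
  have hL_pos : (0 : ℝ) < L := (Real.exp_pos _).trans hL
  obtain ⟨n, hn⟩ := hcard (2 * L)
  have hblock (a : ι n) : (hadamardVector H e ∘ τ) (τ.symm ⟨n, a⟩) =
      blockVector (H n) (blockEmbedding e n) a := by
    rw [Function.comp_apply, τ.apply_symm_apply]
    rfl
  have hlog : Real.log (L + 1) ≤ 32 * C :=
    log_le_of_hasPartialSumBound_blockVector (hH n) (blockEmbedding e n) hC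
      (τ.symm.injective.comp sigma_mk_injective) hblock (by exact_mod_cast hL_pos) hn
  rw [Real.log_le_iff_le_exp (by positivity)] at hlog
  linarith

end Family

/-- The complex Banach space `ℓ¹` contains an Auerbach basis
`(xₙ, xₙ*)` such that for every permutation `σ` of `ℕ` no constant `C` gives a uniform
partial-sum bound; in particular no permutation of this Auerbach basis is equivalent to
a Schauder basis of `ℓ¹`. -/
theorem l1_exists_Auerbach_basis_no_permutation_Schauder :
    ∃ (x : ℕ → lp (fun _ : ℕ => ℂ) 1)
      (xs : ℕ → lp (fun _ : ℕ => ℂ) 1 →L[ℂ] ℂ),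
      (∀ m n, xs m (x n) = if m = n then 1 else 0) ∧
      (Submodule.span ℂ (Set.range x)).topologicalClosure = ⊤ ∧
      (∀ v : lp (fun _ : ℕ => ℂ) 1, (∀ n, xs n v = 0) → v = 0) ∧
      (∀ n, ‖x n‖ = 1) ∧
      (∀ n, ‖xs n‖ = 1) ∧
      ∀ σ : Equiv.Perm ℕ, ¬ ∃ C : ℝ,
        ∀ m n : ℕ, m ≤ n → ∀ a : ℕ → ℂ,
          ‖∑ i ∈ Finset.range m, a i • x (σ i)‖ ≤
            C * ‖∑ i ∈ Finset.range n, a i • x (σ i)‖ := by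
  have : Infinite (Σ n : ℕ, ZMod (n + 1)) := .of_surjective Sigma.fst fun n => ⟨⟨n, 0⟩, rfl⟩
  obtain ⟨e⟩ := nonempty_equiv_of_countable (α := Σ n : ℕ, ZMod (n + 1)) (β := ℕ)
  have hFourier (n : ℕ) := isHadamard_stdAddChar (n + 1)
  have hbasis := (isAuerbachBasis_hadamardVector hFourier e).comp_equiv e.symm
  refine ⟨_, _, hbasis.biorthogonal, hbasis.fundamental, hbasis.total, hbasis.norm_vector,
    hbasis.norm_functional, ?_⟩
  rintro σ ⟨C, hC⟩
  have hcard (N : ℕ) : ∃ n, N ≤ Fintype.card (ZMod (n + 1)) := ⟨N, by simp⟩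
  exact not_hasPartialSumBound_hadamardVector hFourier hcard e (σ.trans e.symm) C hC
end

section
/- Let 1 < p < ∞ with p ≠ 2. The complex Banach space ℓᵖ contains an Auerbach basis {x_n, x_n*}_{n∈ℕ} that is not an unconditional Schauder basis: there is no constant K < ∞ such that for every n, all scalars a_1,…,a_n, and all signs θ_1,…,θ_n ∈ {−1,1}, one has ‖Σ_{i=1}^n θ_i a_i x_i‖ ≤ K‖Σ_{i=1}^n a_i x_i‖. -/
open scoped BigOperators ENNReal
open scoped Matrix

/-!
A Hadamard matrix of order `N`, with its rows scaled to norm one in `ℓᵖ_N` and the conjugates of its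
rows scaled to norm one in the dual, is an Auerbach basis of `ℓᵖ_N`, because all its entries have
modulus one. Cutting the index set into blocks of sizes `4 ^ k` and placing such a basis on each
block gives an Auerbach basis of `ℓᵖ`.

For the matrices on the blocks take the Kronecker powers of the Hadamard matrix `J - 2I` of order
four, whose columns sum to the constant `2`. With `N = 4 ^ k`, the sum of the basis vectors of a
block has constant coordinates and norm `√N`, whereas the sum with signs taken from a column of the
matrix is a multiple of a unit vector and has norm `N ^ (1 - 1 / p)`. An unconditional constant
would bound the ratio of `√N` and `N ^ (1 - 1 / p)` in both directions uniformly in `k`, which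
forces `p = 2`.
-/

noncomputable section

namespace LpAuerbach

section Bases

variable {𝕜 E ι ι' : Type*} [RCLike 𝕜] [NormedAddCommGroup E] [NormedSpace 𝕜 E]

/-- Auerbach bases: biorthogonal systems, indexed by an arbitrary type, which are fundamental,
total, and consist of vectors and functionals of norm one. -/
structure IsAuerbachBasis [DecidableEq ι] (x : ι → E) (xs : ι → E →L[𝕜] 𝕜) : Prop where
  biorthogonal : ∀ i j, xs i (x j) = if i = j then 1 else 0
  fundamental : (Submodule.span 𝕜 (Set.range x)).topologicalClosure = ⊤
  total : ∀ v, (∀ i, xs i v = 0) → v = 0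
  norm_vec : ∀ i, ‖x i‖ = 1
  norm_functional : ∀ i, ‖xs i‖ = 1

lemma IsAuerbachBasis.comp_equiv [DecidableEq ι] [DecidableEq ι'] {x : ι → E} {xs : ι → E →L[𝕜] 𝕜}
    (h : IsAuerbachBasis x xs) (e : ι' ≃ ι) : IsAuerbachBasis (x ∘ e) (xs ∘ e) where
  biorthogonal i j := by simp only [Function.comp_apply, h.biorthogonal, e.injective.eq_iff]
  fundamental := by rw [e.surjective.range_comp, h.fundamental]
  total v hv := h.total v fun i => by simpa using hv (e.symm i)
  norm_vec i := h.norm_vec (e i)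
  norm_functional i := h.norm_functional (e i)

variable (𝕜) in
/-- The sign-change bound with constant `K` that defines unconditional bases. Ranging over finite
subsets instead of initial segments makes it meaningful for families indexed by any type. -/
def IsUnconditionalWith (K : ℝ) (x : ι → E) : Prop :=
  ∀ (s : Finset ι) (a : ι → 𝕜) (θ : ι → ℝ), (∀ i, θ i = 1 ∨ θ i = -1) →
    ‖∑ i ∈ s, ((θ i : 𝕜) * a i) • x i‖ ≤ K * ‖∑ i ∈ s, a i • x i‖

lemma IsUnconditionalWith.of_range {K : ℝ} {x : ℕ → E}
    (h : ∀ (n : ℕ) (a : ℕ → 𝕜) (θ : ℕ → ℝ), (∀ i, θ i = 1 ∨ θ i = -1) →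
      ‖∑ i ∈ Finset.range n, ((θ i : 𝕜) * a i) • x i‖ ≤ K * ‖∑ i ∈ Finset.range n, a i • x i‖) :
    IsUnconditionalWith 𝕜 K x := by
  intro s a θ hθ
  obtain ⟨n, hn⟩ := s.exists_nat_subset_range
  simpa [ite_smul, Finset.sum_ite_mem, Finset.inter_eq_right.mpr hn] using
    h n (fun i => if i ∈ s then a i else 0) θ hθ

lemma IsUnconditionalWith.comp_embedding {K : ℝ} {x : ι → E} (h : IsUnconditionalWith 𝕜 K x)
    (g : ι' ↪ ι) : IsUnconditionalWith 𝕜 K (x ∘ g) := by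
  intro s a θ hθ
  have hsign : ∀ i, Function.extend g θ 1 i = 1 ∨ Function.extend g θ 1 i = -1 := fun i => by
    by_cases hi : ∃ j, g j = i
    · obtain ⟨j, rfl⟩ := hi
      simpa only [g.injective.extend_apply] using hθ j
    · exact Or.inl (Function.extend_apply' _ _ _ hi)
  simpa [Finset.sum_map, g.injective.extend_apply] using
    h (s.map g) (Function.extend g a 0) (Function.extend g θ 1) hsign

end Bases

section KroneckerPower

variable {ι m n l R : Type*} [Fintype ι] [CommSemiring R]

variable (ι) in
/-- The Kronecker power of `A` with one factor for each element of `ι`; rows and columns are indexed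
by functions, which spares the reindexing that iterated products would need. -/
def kroneckerPow (A : Matrix m n R) : Matrix (ι → m) (ι → n) R :=
  Matrix.of fun s t => ∏ i, A (s i) (t i)

lemma vecMul_kroneckerPow [DecidableEq ι] [Fintype m] (v : ι → m → R) (A : Matrix m n R) :
    (fun s => ∏ i, v i (s i)) ᵥ* kroneckerPow ι A = fun t => ∏ i, (v i ᵥ* A) (t i) := by
  ext t
  simp only [Matrix.vecMul, dotProduct, kroneckerPow, Matrix.of_apply, ← Finset.prod_mul_distrib,
    Finset.prod_univ_sum, Fintype.piFinset_univ]

lemma kroneckerPow_mul [DecidableEq ι] [Fintype m] (A : Matrix l m R) (B : Matrix m n R) :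
    kroneckerPow ι (A * B) = kroneckerPow ι A * kroneckerPow ι B := by
  ext s t
  exact (congrFun (vecMul_kroneckerPow (fun i => A (s i)) B) t).symm

lemma kroneckerPow_smul_one [DecidableEq m] (c : R) :
    kroneckerPow ι (c • (1 : Matrix m m R)) = c ^ Fintype.card ι • 1 := by
  ext s t
  simp [kroneckerPow, Matrix.one_apply, Finset.prod_ite_zero, funext_iff]

lemma conjTranspose_kroneckerPow [StarRing R] (A : Matrix m n R) :
    (kroneckerPow ι A)ᴴ = kroneckerPow ι Aᴴ := by
  ext s t
  simp [kroneckerPow, star_prod]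

lemma isHadamard_kroneckerPow [StarRing R] [DecidableEq ι] [Fintype m] [DecidableEq m]
    {A : Matrix m m R} (hA : A.IsHadamard) : (kroneckerPow ι A).IsHadamard where
  apply_mem s t := prod_mem fun i _ => hA.apply_mem (s i) (t i)
  mul_conjTranspose := by
    rw [conjTranspose_kroneckerPow, ← kroneckerPow_mul, hA.mul_conjTranspose, kroneckerPow_smul_one,
      Fintype.card_fun, Nat.cast_pow]
  conjTranspose_mul := by
    rw [conjTranspose_kroneckerPow, ← kroneckerPow_mul, hA.conjTranspose_mul, kroneckerPow_smul_one,
      Fintype.card_fun, Nat.cast_pow]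

end KroneckerPower

section RegularHadamard

variable (R : Type*) [CommRing R]

/-- The matrix `J - 2I` of order four, a regular Hadamard matrix, that is, one with constant row
and column sums. -/
def regularHadamardFour : Matrix (Fin 4) (Fin 4) R :=
  Matrix.of fun s t => if s = t then -1 else 1

lemma conjTranspose_regularHadamardFour [StarRing R] :
    (regularHadamardFour R)ᴴ = regularHadamardFour R := by
  ext s t
  simp [regularHadamardFour, apply_ite star, eq_comm]

lemma regularHadamardFour_mul_self :
    regularHadamardFour R * regularHadamardFour R = (4 : R) • 1 := by
  ext s t
  fin_cases s <;> fin_cases t <;>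
    simp [regularHadamardFour, Matrix.mul_apply, Fin.sum_univ_four] <;> norm_num

lemma isHadamard_regularHadamardFour [StarRing R] : (regularHadamardFour R).IsHadamard where
  apply_mem s t := by
    unfold regularHadamardFour
    by_cases h : s = t <;> simp [h, Unitary.mem_iff]
  mul_conjTranspose := by
    simp [conjTranspose_regularHadamardFour, regularHadamardFour_mul_self]
  conjTranspose_mul := by
    simp [conjTranspose_regularHadamardFour, regularHadamardFour_mul_self]

variable {R} {ι : Type*} [Fintype ι]

lemma kroneckerPow_regularHadamardFour_eq_one_or_neg_one (s t : ι → Fin 4) :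
    kroneckerPow ι (regularHadamardFour R) s t = 1 ∨
      kroneckerPow ι (regularHadamardFour R) s t = -1 := by
  refine Finset.prod_induction _ (fun x : R => x = 1 ∨ x = -1) ?_ (Or.inl rfl) fun i _ => ?_
  · rintro _ _ (rfl | rfl) (rfl | rfl) <;> simp
  · by_cases h : s i = t i <;> simp [regularHadamardFour, h]

lemma sum_kroneckerPow_regularHadamardFour [DecidableEq ι] (t : ι → Fin 4) :
    ∑ s, kroneckerPow ι (regularHadamardFour R) s t = 2 ^ Fintype.card ι := by
  have hcol (j : Fin 4) : ∑ i, regularHadamardFour R i j = 2 := by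
    fin_cases j <;> simp [regularHadamardFour, Fin.sum_univ_four] <;> norm_num
  simpa [Matrix.vecMul, dotProduct, hcol] using
    congrFun (vecMul_kroneckerPow (fun (_ : ι) _ => 1) (regularHadamardFour R)) t

end RegularHadamard

section Blocks

variable {ι T : Type*} {p : ℝ≥0∞}

lemma sum_norm_apply_le {E : ι → Type*} [∀ i, NormedAddCommGroup (E i)] (hp : 1 ≤ p.toReal)
    (v : lp E p) (s : Finset ι) :
    ∑ i ∈ s, ‖v i‖ ≤ (s.card : ℝ) ^ (1 - p.toReal⁻¹) * ‖v‖ := by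
  have hp0 : 0 < p.toReal := by linarith
  have hv : 0 ≤ ‖v‖ := lp.norm_nonneg' v
  refine (Real.rpow_le_rpow_iff (by positivity) (by positivity) hp0).mp ?_
  calc (∑ i ∈ s, ‖v i‖) ^ p.toReal
      ≤ (s.card : ℝ) ^ (p.toReal - 1) * ∑ i ∈ s, ‖v i‖ ^ p.toReal :=
        Real.rpow_sum_le_const_mul_sum_rpow_of_nonneg s hp fun _ _ => norm_nonneg _
    _ ≤ (s.card : ℝ) ^ (p.toReal - 1) * ‖v‖ ^ p.toReal := by
        gcongr
        exact lp.sum_rpow_le_norm_rpow hp0 v s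
    _ = ((s.card : ℝ) ^ (1 - p.toReal⁻¹) * ‖v‖) ^ p.toReal := by
        rw [Real.mul_rpow (by positivity) hv, ← Real.rpow_mul (by positivity), sub_mul, one_mul,
          inv_mul_cancel₀ hp0.ne']

variable {𝕜 : Type*} [RCLike 𝕜] [Fintype T]

/-- The functional on `ℓᵖ(ι)` with coefficients `d t` at the coordinates `g t`. -/
def blockFun (p : ℝ≥0∞) [Fact (1 ≤ p)] (g : T ↪ ι) (d : T → 𝕜) :
    lp (fun _ : ι => 𝕜) p →L[𝕜] 𝕜 :=
  ∑ t, d t • lp.evalCLM 𝕜 (fun _ : ι => 𝕜) p (g t)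

lemma blockFun_apply [Fact (1 ≤ p)] (g : T ↪ ι) (d : T → 𝕜) (v : lp (fun _ : ι => 𝕜) p) :
    blockFun p g d v = d ⬝ᵥ (v ∘ g) := by
  simp [blockFun, lp.evalCLM, dotProduct]

lemma norm_blockFun_le [Fact (1 ≤ p)] (hp : p ≠ ⊤) (g : T ↪ ι) {d : T → 𝕜} {D : ℝ} (hD : 0 ≤ D)
    (hd : ∀ t, ‖d t‖ ≤ D) : ‖blockFun p g d‖ ≤ D * (Fintype.card T : ℝ) ^ (1 - p.toReal⁻¹) := by
  refine ContinuousLinearMap.opNorm_le_bound _ (by positivity) fun v => ?_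
  calc ‖blockFun p g d v‖ = ‖∑ t, d t * v (g t)‖ := by rw [blockFun_apply]; rfl
    _ ≤ ∑ t, ‖d t * v (g t)‖ := norm_sum_le _ _
    _ ≤ ∑ t, D * ‖v (g t)‖ := by
        gcongr with t
        rw [norm_mul]
        gcongr
        exact hd t
    _ = D * ∑ i ∈ Finset.univ.map g, ‖v i‖ := by rw [Finset.sum_map, Finset.mul_sum]
    _ ≤ D * ((Fintype.card T : ℝ) ^ (1 - p.toReal⁻¹) * ‖v‖) := by
        gcongr
        simpa using sum_norm_apply_le ((ENNReal.dichotomy p).resolve_left hp) v (Finset.univ.map g)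
    _ = D * (Fintype.card T : ℝ) ^ (1 - p.toReal⁻¹) * ‖v‖ := (mul_assoc _ _ _).symm

variable [DecidableEq ι]

/-- The vector of `ℓᵖ(ι)` whose coordinates are `c t` at `g t`, and zero outside the range
of `g`. -/
def blockVec (p : ℝ≥0∞) (g : T ↪ ι) : (T → 𝕜) →ₗ[𝕜] lp (fun _ : ι => 𝕜) p :=
  ∑ t, lp.lsingle p (g t) ∘ₗ LinearMap.proj t

lemma blockVec_eq_sum_single (g : T ↪ ι) (c : T → 𝕜) :
    blockVec p g c = ∑ t, lp.single p (g t) (c t) := by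
  simp [blockVec]

lemma blockVec_comp (g : T ↪ ι) (c : T → 𝕜) : blockVec p g c ∘ g = c := by
  classical
  ext t
  simp only [Function.comp_apply, blockVec_eq_sum_single, lp.coeFn_sum, Finset.sum_apply,
    lp.coeFn_single, Pi.single_apply, g.injective.eq_iff, Finset.sum_ite_eq, Finset.mem_univ,
    if_true]

lemma blockVec_apply_of_notMem_range (g : T ↪ ι) (c : T → 𝕜) {i : ι} (hi : i ∉ Set.range g) :
    blockVec p g c i = 0 := by
  rw [blockVec_eq_sum_single, lp.coeFn_sum, Finset.sum_apply]
  refine Finset.sum_eq_zero fun t _ => ?_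
  rw [lp.coeFn_single, Pi.single_eq_of_ne fun h => hi ⟨t, h.symm⟩]

lemma blockVec_single [DecidableEq T] (g : T ↪ ι) (t : T) (c : 𝕜) :
    blockVec p g (Pi.single t c) = lp.single p (g t) c := by
  rw [blockVec_eq_sum_single, Finset.sum_eq_single t (fun s _ hs => by simp [hs]) (by simp),
    Pi.single_eq_same]

lemma norm_blockVec_of_norm_eq (hp : 0 < p.toReal) (g : T ↪ ι) {c : T → 𝕜} {C : ℝ} (hC : 0 ≤ C)
    (hc : ∀ t, ‖c t‖ = C) : ‖blockVec p g c‖ = (Fintype.card T : ℝ) ^ p.toReal⁻¹ * C := by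
  have h := lp.norm_sum_single (E := fun _ : ι => 𝕜) hp (Function.extend g c 0)
    (Finset.univ.map g)
  simp only [Finset.sum_map, g.injective.extend_apply, ← blockVec_eq_sum_single, hc,
    Finset.sum_const, Finset.card_univ, nsmul_eq_mul] at h
  rw [← Real.rpow_rpow_inv (lp.norm_nonneg' (blockVec p g c)) hp.ne', h,
    Real.mul_rpow (by positivity) (by positivity), Real.rpow_rpow_inv hC hp.ne']

end Blocks

section HadamardSystem

variable {𝕜 ι κ : Type*} {T : κ → Type*} [RCLike 𝕜] {p : ℝ≥0∞}

/-- The places in `ι` allotted to the `k`-th block. -/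
def block (e : (Σ k, T k) ≃ ι) (k : κ) : T k ↪ ι :=
  (Function.Embedding.sigmaMk k).trans e.toEmbedding

lemma block_notMem_range_block (e : (Σ k, T k) ≃ ι) {k l : κ} (hkl : k ≠ l) (t : T k) :
    block e k t ∉ Set.range (block e l) := by
  rintro ⟨s, hs⟩
  exact hkl (congrArg Sigma.fst (e.injective hs)).symm

variable [∀ k, Fintype (T k)]

lemma card_block_pos {k : κ} (s : T k) : (0 : ℝ) < Fintype.card (T k) :=
  Nat.cast_pos.mpr (Fintype.card_pos_iff.mpr ⟨s⟩)

/-- The conjugates of the rows of the matrices `W k`, placed on the blocks of `ι` and scaled so that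
unimodular rows have norm one in the dual of `ℓᵖ(ι)`. -/
def hadamardFun (p : ℝ≥0∞) [Fact (1 ≤ p)] (e : (Σ k, T k) ≃ ι) (W : ∀ k, Matrix (T k) (T k) 𝕜)
    (i : Σ k, T k) : lp (fun _ : ι => 𝕜) p →L[𝕜] 𝕜 :=
  blockFun p (block e i.1)
    ((((Fintype.card (T i.1) : ℝ) ^ (p.toReal⁻¹ - 1) : ℝ) : 𝕜) • star (W i.1 i.2))

section

variable [∀ k, DecidableEq (T k)] {W : ∀ k, Matrix (T k) (T k) 𝕜}

lemma norm_hadamardFun_le [Fact (1 ≤ p)] (hp : p ≠ ⊤) (e : (Σ k, T k) ≃ ι)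
    {i : Σ k, T k} (hW : (W i.1).IsHadamard) : ‖hadamardFun p e W i‖ ≤ 1 := by
  have hN := card_block_pos i.2
  refine (norm_blockFun_le hp (block e i.1)
    (D := (Fintype.card (T i.1) : ℝ) ^ (p.toReal⁻¹ - 1)) (by positivity) fun t => ?_).trans_eq ?_
  · rw [Pi.smul_apply, norm_smul, Pi.star_apply, norm_star,
      CStarRing.norm_of_mem_unitary (hW.apply_mem i.2 t), mul_one, RCLike.norm_ofReal,
      abs_of_pos (by positivity)]
  · rw [← Real.rpow_add hN, sub_add_sub_cancel, sub_self, Real.rpow_zero]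

lemma eq_zero_of_hadamardFun_eq_zero [Fact (1 ≤ p)] (hW : ∀ k, (W k).IsHadamard)
    (e : (Σ k, T k) ≃ ι) (v : lp (fun _ : ι => 𝕜) p) (hv : ∀ i, hadamardFun p e W i v = 0) :
    v = 0 := by
  ext i
  obtain ⟨⟨k, t⟩, rfl⟩ := e.surjective i
  have hN := card_block_pos t
  have hvec : (v ∘ block e k) ᵥ* (W k)ᴴ = 0 := by
    ext s
    have h := hv ⟨k, s⟩
    rw [hadamardFun, blockFun_apply, smul_dotProduct, dotProduct_comm] at h
    refine (smul_eq_zero.mp h).resolve_left (RCLike.ofReal_ne_zero.mpr ?_)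
    positivity
  have hsmul : (Fintype.card (T k) : 𝕜) • (v ∘ block e k) = 0 := by
    rw [← Matrix.vecMul_one (v ∘ block e k), ← Matrix.vecMul_smul, ← (hW k).conjTranspose_mul,
      ← Matrix.vecMul_vecMul, hvec, Matrix.zero_vecMul]
  exact congrFun ((smul_eq_zero.mp hsmul).resolve_left (mod_cast hN.ne')) t

end

variable [DecidableEq ι]

/-- The rows of the matrices `W k`, placed on the blocks of `ι` and scaled so that unimodular rows
have norm one in `ℓᵖ(ι)`. -/
def hadamardVec (p : ℝ≥0∞) (e : (Σ k, T k) ≃ ι) (W : ∀ k, Matrix (T k) (T k) 𝕜) (i : Σ k, T k) :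
    lp (fun _ : ι => 𝕜) p :=
  blockVec p (block e i.1) ((((Fintype.card (T i.1) : ℝ) ^ (-p.toReal⁻¹) : ℝ) : 𝕜) • W i.1 i.2)

lemma sum_smul_hadamardVec (e : (Σ k, T k) ≃ ι) (W : ∀ k, Matrix (T k) (T k) 𝕜) {k : κ}
    (a : T k → 𝕜) :
    ∑ s, a s • hadamardVec p e W ⟨k, s⟩ =
      blockVec p (block e k) ((((Fintype.card (T k) : ℝ) ^ (-p.toReal⁻¹) : ℝ) : 𝕜) • a ᵥ* W k) := by
  simp only [hadamardVec, map_smul, smul_comm (a _), Matrix.vecMul_eq_sum, map_sum,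
    Finset.smul_sum]

lemma norm_sum_smul_hadamardVec_of_norm_vecMul_eq [Fact (1 ≤ p)] (hp : p ≠ ⊤) (e : (Σ k, T k) ≃ ι)
    (W : ∀ k, Matrix (T k) (T k) 𝕜) {k : κ} [Nonempty (T k)] {a : T k → 𝕜} {C : ℝ}
    (ha : ∀ t, ‖(a ᵥ* W k) t‖ = C) : ‖∑ s, a s • hadamardVec p e W ⟨k, s⟩‖ = C := by
  have hp0 : 0 < p.toReal := ENNReal.toReal_pos (zero_lt_one.trans_le Fact.out).ne' hp
  obtain ⟨t₀⟩ := ‹Nonempty (T k)›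
  have hN := card_block_pos t₀
  have hC : 0 ≤ C := ha t₀ ▸ norm_nonneg _
  rw [sum_smul_hadamardVec, map_smul, norm_smul, norm_blockVec_of_norm_eq hp0 _ hC ha,
    RCLike.norm_ofReal, abs_of_pos (by positivity), ← mul_assoc, ← Real.rpow_add hN, neg_add_cancel,
    Real.rpow_zero, one_mul]

lemma hadamardFun_hadamardVec_of_ne [Fact (1 ≤ p)] (e : (Σ k, T k) ≃ ι)
    (W : ∀ k, Matrix (T k) (T k) 𝕜) {k l : κ} (hkl : k ≠ l) (s : T k) (t : T l) :
    hadamardFun p e W ⟨k, s⟩ (hadamardVec p e W ⟨l, t⟩) = 0 := by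
  have hzero (c : T l → 𝕜) : blockVec p (block e l) c ∘ block e k = 0 :=
    funext fun u => blockVec_apply_of_notMem_range _ _ (block_notMem_range_block e hkl u)
  rw [hadamardFun, blockFun_apply, hadamardVec, hzero, dotProduct_zero]

variable [∀ k, DecidableEq (T k)] {W : ∀ k, Matrix (T k) (T k) 𝕜}

lemma norm_sum_star_smul_hadamardVec [Fact (1 ≤ p)] (e : (Σ k, T k) ≃ ι) {k : κ}
    (hW : (W k).IsHadamard) (t : T k) :
    ‖∑ s, star (W k s t) • hadamardVec p e W ⟨k, s⟩‖ =
      (Fintype.card (T k) : ℝ) ^ (1 - p.toReal⁻¹) := by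
  have hp : 0 < p := zero_lt_one.trans_le Fact.out
  have hN := card_block_pos t
  have hcol : (fun s => star (W k s t)) ᵥ* W k = (Fintype.card (T k) : 𝕜) • Pi.single t 1 := by
    ext u
    refine (congrFun (congrFun hW.conjTranspose_mul t) u).trans ?_
    simp [Matrix.one_apply, Pi.single_apply, eq_comm]
  rw [sum_smul_hadamardVec, hcol, map_smul, map_smul, blockVec_single, norm_smul, norm_smul,
    lp.norm_single hp, norm_one, mul_one, RCLike.norm_ofReal, abs_of_pos (by positivity),
    RCLike.norm_natCast, ← Real.rpow_add_one hN.ne', neg_add_eq_sub]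

lemma norm_hadamardVec [Fact (1 ≤ p)] (hp : p ≠ ⊤) (e : (Σ k, T k) ≃ ι)
    {i : Σ k, T k} (hW : (W i.1).IsHadamard) : ‖hadamardVec p e W i‖ = 1 := by
  obtain ⟨k, s⟩ := i
  have : Nonempty (T k) := ⟨s⟩
  have h (t : T k) : ‖(Pi.single s 1 ᵥ* W k) t‖ = 1 := by
    simpa using CStarRing.norm_of_mem_unitary (hW.apply_mem s t)
  simpa [Pi.single_apply] using norm_sum_smul_hadamardVec_of_norm_vecMul_eq hp e W h

lemma hadamardFun_hadamardVec_same_block [Fact (1 ≤ p)] (e : (Σ k, T k) ≃ ι) {k : κ}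
    (hW : (W k).IsHadamard) (s t : T k) :
    hadamardFun p e W ⟨k, s⟩ (hadamardVec p e W ⟨k, t⟩) = if s = t then 1 else 0 := by
  have hN := card_block_pos s
  have hscale : (Fintype.card (T k) : ℝ) ^ (-p.toReal⁻¹) *
      (Fintype.card (T k) : ℝ) ^ (p.toReal⁻¹ - 1) * Fintype.card (T k) = 1 := by
    rw [← Real.rpow_add hN, neg_add_eq_sub, sub_sub_cancel_left, Real.rpow_neg_one,
      inv_mul_cancel₀ hN.ne']
  have hrow : star (W k s) ⬝ᵥ W k t = (Fintype.card (T k) : 𝕜) * if s = t then 1 else 0 := by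
    rw [dotProduct_comm]
    refine (congrFun (congrFun hW.mul_conjTranspose t) s).trans ?_
    simp [Matrix.one_apply, eq_comm]
  simp only [hadamardFun, blockFun_apply, hadamardVec, blockVec_comp, smul_dotProduct,
    dotProduct_smul, hrow, smul_eq_mul, ← mul_assoc]
  rw [← RCLike.ofReal_mul, ← RCLike.ofReal_natCast (K := 𝕜), ← RCLike.ofReal_mul, hscale,
    RCLike.ofReal_one, one_mul]

lemma hadamardFun_hadamardVec [DecidableEq κ] [Fact (1 ≤ p)] (hW : ∀ k, (W k).IsHadamard)
    (e : (Σ k, T k) ≃ ι) (i j : Σ k, T k) :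
    hadamardFun p e W i (hadamardVec p e W j) = if i = j then 1 else 0 := by
  obtain ⟨k, s⟩ := i
  obtain ⟨l, t⟩ := j
  rcases eq_or_ne k l with rfl | hkl
  · simp [hadamardFun_hadamardVec_same_block e (hW _)]
  · simp [hadamardFun_hadamardVec_of_ne e W hkl, hkl]

omit [DecidableEq ι] in
lemma norm_hadamardFun [Fact (1 ≤ p)] (hp : p ≠ ⊤) (e : (Σ k, T k) ≃ ι)
    {i : Σ k, T k} (hW : (W i.1).IsHadamard) : ‖hadamardFun p e W i‖ = 1 := by
  classical
  refine le_antisymm (norm_hadamardFun_le hp e hW) ?_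
  simpa [hadamardFun_hadamardVec_same_block e hW, norm_hadamardVec hp e hW] using
    (hadamardFun p e W i).le_opNorm (hadamardVec p e W i)

lemma blockVec_mem_span_hadamardVec (e : (Σ k, T k) ≃ ι) {k : κ} (hW : (W k).IsHadamard)
    (c : T k → 𝕜) :
    blockVec p (block e k) c ∈ Submodule.span 𝕜 (Set.range (hadamardVec p e W)) := by
  cases isEmpty_or_nonempty (T k) with
  | inl _ => simp [blockVec_eq_sum_single]
  | inr h =>
    obtain ⟨t⟩ := h
    have hN := card_block_pos t
    set r : 𝕜 := (((Fintype.card (T k) : ℝ) ^ (-p.toReal⁻¹) : ℝ) : 𝕜)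
    have hr : r * Fintype.card (T k) ≠ 0 := by
      refine mul_ne_zero (RCLike.ofReal_ne_zero.mpr ?_) ?_
      · positivity
      · exact_mod_cast hN.ne'
    have h : ∑ s, (c ᵥ* (W k)ᴴ) s • hadamardVec p e W ⟨k, s⟩ =
        (r * Fintype.card (T k)) • blockVec p (block e k) c := by
      rw [sum_smul_hadamardVec, Matrix.vecMul_vecMul, hW.conjTranspose_mul, Matrix.vecMul_smul,
        Matrix.vecMul_one, smul_smul, map_smul]
    rw [← Submodule.smul_mem_iff _ hr, ← h]
    exact Submodule.sum_mem _ fun s _ => Submodule.smul_mem _ _ (Submodule.subset_span ⟨_, rfl⟩)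

lemma span_hadamardVec_dense [Fact (1 ≤ p)] (hp : p ≠ ⊤) (hW : ∀ k, (W k).IsHadamard)
    (e : (Σ k, T k) ≃ ι) :
    (Submodule.span 𝕜 (Set.range (hadamardVec p e W))).topologicalClosure = ⊤ := by
  have hsingle : ∀ (i : ι) (c : 𝕜),
      lp.single p i c ∈ Submodule.span 𝕜 (Set.range (hadamardVec p e W)) := fun i c => by
    obtain ⟨⟨k, t⟩, rfl⟩ := e.surjective i
    exact blockVec_single (block e k) t c ▸ blockVec_mem_span_hadamardVec e (hW k) _
  refine eq_top_iff.mpr fun v _ => ?_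
  exact mem_closure_of_tendsto (lp.hasSum_single hp v) <| Filter.Eventually.of_forall fun F =>
    Submodule.sum_mem _ fun i _ => hsingle i _

lemma isAuerbachBasis_hadamardVec [DecidableEq κ] [Fact (1 ≤ p)] (hp : p ≠ ⊤)
    (hW : ∀ k, (W k).IsHadamard) (e : (Σ k, T k) ≃ ι) :
    IsAuerbachBasis (hadamardVec p e W) (hadamardFun p e W) where
  biorthogonal := hadamardFun_hadamardVec hW e
  fundamental := span_hadamardVec_dense hp hW e
  total := eq_zero_of_hadamardFun_eq_zero hW e
  norm_vec _ := norm_hadamardVec hp e (hW _)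
  norm_functional _ := norm_hadamardFun hp e (hW _)

lemma IsUnconditionalWith.bounds_of_sum_col_norm_eq [Fact (1 ≤ p)] (hp : p ≠ ⊤)
    {e : (Σ k, T k) ≃ ι} {K : ℝ} (hK : IsUnconditionalWith 𝕜 K (hadamardVec p e W)) {k : κ}
    (hW : (W k).IsHadamard) {t₀ : T k}
    (ht₀ : ∀ s, W k s t₀ = 1 ∨ W k s t₀ = -1) {C : ℝ} (hC : ∀ t, ‖∑ s, W k s t‖ = C) :
    C ≤ K * (Fintype.card (T k) : ℝ) ^ (1 - p.toReal⁻¹) ∧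
      (Fintype.card (T k) : ℝ) ^ (1 - p.toReal⁻¹) ≤ K * C := by
  have : Nonempty (T k) := ⟨t₀⟩
  set θ : T k → ℝ := fun s => RCLike.re (W k s t₀)
  have hθ : ∀ s, θ s = 1 ∨ θ s = -1 := fun s => by
    rcases ht₀ s with h | h <;> simp [θ, h]
  have hθW : ∀ s, (θ s : 𝕜) = star (W k s t₀) := fun s => by
    rcases ht₀ s with h | h <;> simp [θ, h]
  have hθθ : ∀ s, (θ s : 𝕜) * (θ s : 𝕜) = 1 := fun s => by
    rcases hθ s with h | h <;> simp [h]
  have hsum : ‖∑ s, (1 : 𝕜) • hadamardVec p e W ⟨k, s⟩‖ = C :=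
    norm_sum_smul_hadamardVec_of_norm_vecMul_eq hp e W fun t => by
      simpa [Matrix.vecMul, dotProduct] using hC t
  have hcol : ‖∑ s, (θ s : 𝕜) • hadamardVec p e W ⟨k, s⟩‖ =
      (Fintype.card (T k) : ℝ) ^ (1 - p.toReal⁻¹) := by
    simpa only [hθW] using norm_sum_star_smul_hadamardVec e hW t₀
  have hbound := fun a : T k → 𝕜 =>
    hK.comp_embedding (Function.Embedding.sigmaMk k) Finset.univ a θ hθ
  constructor
  · simpa only [Function.comp_apply, Function.Embedding.sigmaMk_apply, hθθ, hcol, hsum] using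
      hbound fun s => (θ s : 𝕜)
  · simpa only [Function.comp_apply, Function.Embedding.sigmaMk_apply, mul_one, hcol, hsum] using
      hbound fun _ => 1

end HadamardSystem

lemma le_of_pow_le_mul_pow {u v K : ℝ} (hv : 0 < v) (h : ∀ k : ℕ, u ^ k ≤ K * v ^ k) : u ≤ v := by
  by_contra! hvu
  obtain ⟨k, hk⟩ := pow_unbounded_of_one_lt K ((one_lt_div hv).mpr hvu)
  rw [div_pow, lt_div_iff₀ (by positivity)] at hk
  exact (h k).not_gt hk

lemma eq_two_of_four_rpow_eq_two {r : ℝ} (h : (4 : ℝ) ^ (1 - r⁻¹) = 2) : r = 2 := by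
  have h4 : (4 : ℝ) ^ (2⁻¹ : ℝ) = 2 := by
    rw [show (4 : ℝ) = 2 ^ (2 : ℝ) by norm_num, Real.rpow_rpow_inv (by norm_num) (by norm_num)]
  have hexp : 1 - r⁻¹ = 2⁻¹ :=
    (Real.rpow_right_inj (by norm_num) (by norm_num)).mp (h.trans h4.symm)
  rw [← inv_inj]
  linarith

lemma not_isUnconditionalWith_hadamardVec_kroneckerPow {𝕜 ι κ : Type*} [RCLike 𝕜] [DecidableEq ι]
    {p : ℝ≥0∞} [Fact (1 ≤ p)] (hptop : p ≠ ⊤) (hp2 : p ≠ 2) {d : κ → ℕ} (hd : d.Surjective)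
    (e : (Σ k, Fin (d k) → Fin 4) ≃ ι) (K : ℝ) :
    ¬ IsUnconditionalWith 𝕜 K
      (hadamardVec p e fun k => kroneckerPow (Fin (d k)) (regularHadamardFour 𝕜)) := by
  intro hK
  have hbounds (n : ℕ) : 2 ^ n ≤ K * ((4 : ℝ) ^ (1 - p.toReal⁻¹)) ^ n ∧
      ((4 : ℝ) ^ (1 - p.toReal⁻¹)) ^ n ≤ K * 2 ^ n := by
    obtain ⟨k, rfl⟩ := hd n
    have hcol (t : Fin (d k) → Fin 4) :
        ‖∑ s, kroneckerPow (Fin (d k)) (regularHadamardFour 𝕜) s t‖ = (2 : ℝ) ^ d k := by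
      simp [sum_kroneckerPow_regularHadamardFour]
    simpa [← Real.rpow_natCast, ← Real.rpow_mul, mul_comm] using
      hK.bounds_of_sum_col_norm_eq hptop
        (isHadamard_kroneckerPow (isHadamard_regularHadamardFour 𝕜))
        (fun s => kroneckerPow_regularHadamardFour_eq_one_or_neg_one s 0) hcol
  have hfour : (4 : ℝ) ^ (1 - p.toReal⁻¹) = 2 :=
    le_antisymm (le_of_pow_le_mul_pow two_pos fun n => (hbounds n).2)
      (le_of_pow_le_mul_pow (by positivity) fun n => (hbounds n).1)
  refine hp2 ?_
  rw [← ENNReal.ofReal_toReal hptop, eq_two_of_four_rpow_eq_two hfour, ENNReal.ofReal_ofNat]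

lemma nonempty_prod_equiv_of_countable (ι α : Type*) [Infinite ι] [Nonempty α] [Countable α] :
    Nonempty (ι × α ≃ ι) := by
  refine Cardinal.lift_mk_eq'.mp ?_
  rw [Cardinal.mk_prod, Cardinal.lift_mul, Cardinal.lift_lift, Cardinal.lift_lift]
  refine Cardinal.mul_eq_left (by simp) ?_ (by simp)
  exact (Cardinal.lift_le_aleph0.mpr Cardinal.mk_le_aleph0).trans
    (Cardinal.aleph0_le_lift.mpr (Cardinal.aleph0_le_mk ι))

lemma nonempty_sigma_prod_equiv_of_countable (ι : Type*) {κ : Type*} [Infinite ι] [Nonempty κ]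
    [Countable κ] (T : κ → Type*) [∀ k, Nonempty (T k)] [∀ k, Countable (T k)] :
    Nonempty ((Σ i : ι × κ, T i.2) ≃ ι) := by
  have : Nonempty (Σ k, T k) := ⟨⟨Classical.arbitrary κ, Classical.arbitrary _⟩⟩
  obtain ⟨e⟩ := nonempty_prod_equiv_of_countable ι (Σ k, T k)
  exact ⟨(Equiv.sigmaAssocProd (γ := fun _ k => T k)).trans
    ((Equiv.sigmaEquivProd ι (Σ k, T k)).trans e)⟩

end LpAuerbach

open LpAuerbach in
theorem lp_exists_Auerbach_basis_not_unconditional_general (𝕜 ι : Type*) [RCLike 𝕜]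
    [DecidableEq ι] [Infinite ι] (p : ℝ≥0∞) [Fact (1 ≤ p)] (hptop : p ≠ ⊤) (hp2 : p ≠ 2) :
    ∃ (x : ι → lp (fun _ : ι => 𝕜) p) (xs : ι → lp (fun _ : ι => 𝕜) p →L[𝕜] 𝕜),
      IsAuerbachBasis x xs ∧ ¬ ∃ K : ℝ, IsUnconditionalWith 𝕜 K x := by
  obtain ⟨e⟩ := nonempty_sigma_prod_equiv_of_countable ι fun n : ℕ => Fin n → Fin 4
  have hW (k : ι × ℕ) : (kroneckerPow (Fin k.2) (regularHadamardFour 𝕜)).IsHadamard :=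
    isHadamard_kroneckerPow (isHadamard_regularHadamardFour 𝕜)
  refine ⟨_, _, (isAuerbachBasis_hadamardVec hptop hW e).comp_equiv e.symm, ?_⟩
  rintro ⟨K, hK⟩
  refine not_isUnconditionalWith_hadamardVec_kroneckerPow (𝕜 := 𝕜) hptop hp2
    Prod.snd_surjective e K ?_
  simpa [Function.comp_assoc] using hK.comp_embedding e.toEmbedding

end

/-- For `1 < p < ∞`, `p ≠ 2`, the complex Banach space `ℓᵖ` contains
an Auerbach basis `(xₙ, xₙ*)` that is not an unconditional Schauder basis: no constant
`K` satisfies `‖Σ θᵢ aᵢ xᵢ‖ ≤ K ‖Σ aᵢ xᵢ‖` for all finite scalar sequences `(aᵢ)` and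
all signs `θᵢ ∈ {−1, 1}`. -/
theorem lp_exists_Auerbach_basis_not_unconditional
    (p : ℝ≥0∞) [Fact (1 ≤ p)] (hp1 : 1 < p) (hptop : p ≠ ⊤) (hp2 : p ≠ 2) :
    ∃ (x : ℕ → lp (fun _ : ℕ => ℂ) p)
      (xs : ℕ → lp (fun _ : ℕ => ℂ) p →L[ℂ] ℂ),
      (∀ m n, xs m (x n) = if m = n then 1 else 0) ∧
      (Submodule.span ℂ (Set.range x)).topologicalClosure = ⊤ ∧
      (∀ v : lp (fun _ : ℕ => ℂ) p, (∀ n, xs n v = 0) → v = 0) ∧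
      (∀ n, ‖x n‖ = 1) ∧
      (∀ n, ‖xs n‖ = 1) ∧
      ¬ ∃ K : ℝ,
        ∀ (n : ℕ) (a : ℕ → ℂ) (θ : ℕ → ℝ), (∀ i, θ i = 1 ∨ θ i = -1) →
          ‖∑ i ∈ Finset.range n, ((θ i : ℂ) * a i) • x i‖ ≤
            K * ‖∑ i ∈ Finset.range n, a i • x i‖ := by
  obtain ⟨x, xs, h, hx⟩ := lp_exists_Auerbach_basis_not_unconditional_general ℂ ℕ p hptop hp2
  exact ⟨x, xs, h.biorthogonal, h.fundamental, h.total, h.norm_vec, h.norm_functional,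
    fun ⟨K, hK⟩ => hx ⟨K, .of_range hK⟩⟩
end
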